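/- arXiv:2403.10306 — 10 statements merged into one kernel-verified Lean document; each statement's English description precedes it below -/
import Mathlib

section
/- Let M, N be real symmetric n×n matrices. If condition (NS2) holds (every x ∈ ℝⁿ with xᵀNx = 0 satisfies xᵀMx ≥ 0) and condition (NS3) holds (every x ∈ ℝⁿ with Nx = 0 and xᵀMx = 0 satisfies Mx = 0), then there exists α ∈ ℝ such that M + αN ⪰ 0. -/
/-!
Write `q_A(x) = xᵀ A x`.

If `N` is indefinite, the condition `q_M(x) + α q_N(x) ≥ 0` bounds `α` below by `-q_M(u)/q_N(u)`
when `q_N(u) > 0` and above by `-q_M(v)/q_N(v)` when `q_N(v) < 0`. Such an `α` exists as soon as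
each lower bound is at most each upper bound (`cross_bound`). This holds because `q_N(u + t v)`
vanishes at two values of `t` of opposite signs, and the weighted combination of the inequalities
`q_M(u + t v) ≥ 0` at these two values that cancels the linear term is the required one.

If `N ⪰ 0` (`exists_of_nonneg`), then `q_N(x) = 0` means `N x = 0`, so by the hypotheses `q_M > 0`
on `ker N` outside `K = ker M ∩ ker N`. Both forms factor through the quotient by `K`, so it is
enough to consider the compact unit sphere of a complement `W` of `K`. There the sets
`{q_M + k q_N ≤ 0}` decrease with `k ∈ ℕ`, and a common point would lie in `K ∩ W = 0`; hence one of
them is empty. The case `N ⪯ 0` follows by replacing `(N, α)` by `(-N, -α)`.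
-/

open Matrix

lemma IsSymm.dot_comm {n : ℕ} {A : Matrix (Fin n) (Fin n) ℝ} (hA : A.IsSymm)
    (x y : Fin n → ℝ) : x ⬝ᵥ (A *ᵥ y) = y ⬝ᵥ (A *ᵥ x) := by
  rw [dotProduct_mulVec, ← mulVec_transpose, hA.eq, dotProduct_comm]

lemma quad_add_smul {n : ℕ} {A : Matrix (Fin n) (Fin n) ℝ} (hA : A.IsSymm)
    (u v : Fin n → ℝ) (t : ℝ) :
    (u + t • v) ⬝ᵥ (A *ᵥ (u + t • v)) =
      u ⬝ᵥ (A *ᵥ u) + 2 * t * (u ⬝ᵥ (A *ᵥ v)) + t ^ 2 * (v ⬝ᵥ (A *ᵥ v)) := by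
  simp only [mulVec_add, mulVec_smul, add_dotProduct, dotProduct_add, smul_dotProduct,
    dotProduct_smul, smul_eq_mul, IsSymm.dot_comm hA v u]
  ring

lemma quad_pencil {n : ℕ} (M N : Matrix (Fin n) (Fin n) ℝ) (α : ℝ) (x : Fin n → ℝ) :
    x ⬝ᵥ ((M + α • N) *ᵥ x) = x ⬝ᵥ (M *ᵥ x) + α * (x ⬝ᵥ (N *ᵥ x)) := by
  simp [add_mulVec, smul_mulVec, dotProduct_add, dotProduct_smul]

lemma quad_smul {n : ℕ} (A : Matrix (Fin n) (Fin n) ℝ) (t : ℝ) (x : Fin n → ℝ) :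
    (t • x) ⬝ᵥ (A *ᵥ (t • x)) = t ^ 2 * (x ⬝ᵥ (A *ᵥ x)) := by
  simp only [mulVec_smul, smul_dotProduct, dotProduct_smul, smul_eq_mul]
  ring

/-- A real quadratic with negative leading and positive constant coefficient has two roots
of opposite signs. -/
lemma exists_roots {a b c : ℝ} (ha : 0 < a) (hc : c < 0) :
    ∃ s t : ℝ, s < 0 ∧ 0 < t ∧ a + 2 * s * b + s ^ 2 * c = 0 ∧
      a + 2 * t * b + t ^ 2 * c = 0 ∧ s * t * c = a := by
  have hac : 0 < -(a * c) := by nlinarith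
  have hD : 0 ≤ b ^ 2 - a * c := by nlinarith [sq_nonneg b]
  have hr2 := Real.sq_sqrt hD
  have hbr : |b| < √(b ^ 2 - a * c) := by
    rw [← Real.sqrt_sq_eq_abs]
    exact Real.sqrt_lt_sqrt (sq_nonneg b) (by linarith)
  set r := √(b ^ 2 - a * c)
  obtain ⟨h1, h2⟩ := abs_lt.mp hbr
  have hc0 : c ≠ 0 := hc.ne
  refine ⟨(-b + r) / c, (-b - r) / c, div_neg_of_pos_of_neg (by linarith) hc,
    div_pos_of_neg_of_neg (by linarith) hc, ?_, ?_, ?_⟩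
  all_goals field_simp
  all_goals linarith

lemma cross_bound {n : ℕ} {M N : Matrix (Fin n) (Fin n) ℝ}
    (hM : M.IsSymm) (hN : N.IsSymm)
    (hNS2 : ∀ x : Fin n → ℝ, x ⬝ᵥ (N *ᵥ x) = 0 → 0 ≤ x ⬝ᵥ (M *ᵥ x))
    {u v : Fin n → ℝ} (hu : 0 < u ⬝ᵥ (N *ᵥ u)) (hv : v ⬝ᵥ (N *ᵥ v) < 0) :
    -(u ⬝ᵥ (M *ᵥ u)) / (u ⬝ᵥ (N *ᵥ u)) ≤ -(v ⬝ᵥ (M *ᵥ v)) / (v ⬝ᵥ (N *ᵥ v)) := by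
  obtain ⟨s, t, hs, ht, hs0, ht0, hst⟩ := exists_roots (b := u ⬝ᵥ (N *ᵥ v)) hu hv
  have h1 := hNS2 (u + s • v) (by rw [quad_add_smul hN, hs0])
  have h2 := hNS2 (u + t • v) (by rw [quad_add_smul hN, ht0])
  rw [quad_add_smul hM] at h1 h2
  have h3 : 0 ≤ u ⬝ᵥ (M *ᵥ u) - s * t * (v ⬝ᵥ (M *ᵥ v)) := by
    refine (mul_nonneg_iff_of_pos_left (show 0 < t - s by linarith)).mp ?_
    -- The weights `t` and `-s` are positive and cancel the mixed term `u ⬝ᵥ (M *ᵥ v)`.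
    have h4 := mul_nonneg ht.le h1
    have h5 := mul_nonneg (neg_nonneg.mpr hs.le) h2
    linarith
  have h6 : -(v ⬝ᵥ (M *ᵥ v)) / (v ⬝ᵥ (N *ᵥ v)) =
      -(s * t * (v ⬝ᵥ (M *ᵥ v))) / (u ⬝ᵥ (N *ᵥ u)) := by
    rw [div_eq_div_iff hv.ne hu.ne', ← hst]
    ring
  rw [h6]
  exact div_le_div_of_nonneg_right (by linarith) hu.le

lemma exists_of_nonneg {n : ℕ} (M N : Matrix (Fin n) (Fin n) ℝ)
    (hM : M.IsSymm) (hN : N.IsSymm)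
    (hNS2 : ∀ x : Fin n → ℝ, x ⬝ᵥ (N *ᵥ x) = 0 → 0 ≤ x ⬝ᵥ (M *ᵥ x))
    (hNS3 : ∀ x : Fin n → ℝ, N *ᵥ x = 0 → x ⬝ᵥ (M *ᵥ x) = 0 → M *ᵥ x = 0)
    (hpos : ∀ x : Fin n → ℝ, 0 ≤ x ⬝ᵥ (N *ᵥ x)) :
    ∃ α : ℝ, ∀ x : Fin n → ℝ, 0 ≤ x ⬝ᵥ ((M + α • N) *ᵥ x) := by
  have hpsd : N.PosSemidef := PosSemidef.of_dotProduct_mulVec_nonneg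
    (by simpa [IsHermitian, conjTranspose_eq_transpose_of_trivial] using hN.eq)
    (by simpa using hpos)
  have hker : ∀ x : Fin n → ℝ, x ⬝ᵥ (N *ᵥ x) = 0 → N *ᵥ x = 0 := fun x hx =>
    (hpsd.dotProduct_mulVec_zero_iff x).mp (by simpa using hx)
  obtain ⟨W, hW⟩ := Submodule.exists_isCompl
    (LinearMap.ker M.mulVecLin ⊓ LinearMap.ker N.mulVecLin)
  have hcont : ∀ A : Matrix (Fin n) (Fin n) ℝ, Continuous fun x : Fin n → ℝ => x ⬝ᵥ (A *ᵥ x) :=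
    fun A => by fun_prop
  let C : ℕ → Set (Fin n → ℝ) := fun k =>
    (Metric.sphere 0 1 ∩ W) ∩ {x | x ⬝ᵥ (M *ᵥ x) + k * (x ⬝ᵥ (N *ᵥ x)) ≤ 0}
  have hclosed : ∀ k, IsClosed (C k) := fun k =>
    (Metric.isClosed_sphere.inter W.closed_of_finiteDimensional).inter
      (isClosed_le ((hcont M).add (continuous_const.mul (hcont N))) continuous_const)
  have hcomp : IsCompact (C 0) := (isCompact_sphere (0 : Fin n → ℝ) 1).of_isClosed_subset
    (hclosed 0) fun x hx => hx.1.1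
  have hempty : ∃ k, ¬ (C k).Nonempty := by
    by_contra! hne
    obtain ⟨x, hx⟩ := IsCompact.nonempty_iInter_of_sequence_nonempty_isCompact_isClosed C
      (fun k x hx => ⟨hx.1, by
        have h := hx.2
        simp only [Set.mem_ofPred_eq, Nat.cast_add, Nat.cast_one] at h ⊢
        linarith [hpos x]⟩) hne hcomp hclosed
    rw [Set.mem_iInter] at hx
    have hk : ∀ k : ℕ, x ⬝ᵥ (M *ᵥ x) + k * (x ⬝ᵥ (N *ᵥ x)) ≤ 0 := fun k => (hx k).2
    have hN0 : x ⬝ᵥ (N *ᵥ x) = 0 := by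
      by_contra h0
      obtain ⟨k, hk'⟩ := exists_nat_gt (-(x ⬝ᵥ (M *ᵥ x)) / (x ⬝ᵥ (N *ᵥ x)))
      rw [div_lt_iff₀ (lt_of_le_of_ne (hpos x) (Ne.symm h0))] at hk'
      linarith [hk k]
    have hM0 : x ⬝ᵥ (M *ᵥ x) = 0 := le_antisymm (by simpa using hk 0) (hNS2 x hN0)
    have hNx := hker x hN0
    have hx0 : x = 0 := Submodule.disjoint_def.mp hW.disjoint x
      ⟨by simpa using hNS3 x hNx hM0, by simpa using hNx⟩ (hx 0).1.2
    have hnorm := (hx 0).1.1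
    simp [hx0] at hnorm
  obtain ⟨k, hk⟩ := hempty
  refine ⟨k, fun x => ?_⟩
  obtain ⟨y, ⟨hyM, hyN⟩, w, hw, rfl⟩ : ∃ y ∈ LinearMap.ker M.mulVecLin ⊓
      LinearMap.ker N.mulVecLin, ∃ w ∈ W, y + w = x :=
    Submodule.mem_sup.mp (hW.sup_eq_top ▸ Submodule.mem_top)
  have hyM : M *ᵥ y = 0 := by simpa using hyM
  have hyN : N *ᵥ y = 0 := by simpa using hyN
  have hred : ∀ A : Matrix (Fin n) (Fin n) ℝ, A.IsSymm → A *ᵥ y = 0 →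
      (y + w) ⬝ᵥ (A *ᵥ (y + w)) = w ⬝ᵥ (A *ᵥ w) := fun A hA hy => by
    rw [mulVec_add, hy, zero_add, add_dotProduct, IsSymm.dot_comm hA y w, hy]
    simp
  rw [quad_pencil, hred M hM hyM, hred N hN hyN]
  by_cases hw0 : w = 0
  · simp [hw0]
  by_contra! hneg
  have hnw : 0 < ‖w‖ := norm_pos_iff.mpr hw0
  refine hk ⟨‖w‖⁻¹ • w, ⟨by simp [norm_smul, hnw.ne'], W.smul_mem _ hw⟩, ?_⟩
  simp only [Set.mem_ofPred_eq, quad_smul]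
  nlinarith [sq_nonneg ‖w‖⁻¹]

/-- If (NS2) and (NS3) hold, then there exists `α` with `M + α N ⪰ 0`. -/
theorem stmt_1 {n : ℕ} (M N : Matrix (Fin n) (Fin n) ℝ)
    (hM : M.IsSymm) (hN : N.IsSymm)
    (hNS2 : ∀ x : Fin n → ℝ, x ⬝ᵥ (N *ᵥ x) = 0 → 0 ≤ x ⬝ᵥ (M *ᵥ x))
    (hNS3 : ∀ x : Fin n → ℝ, N *ᵥ x = 0 → x ⬝ᵥ (M *ᵥ x) = 0 → M *ᵥ x = 0) :
    ∃ α : ℝ, ∀ x : Fin n → ℝ, 0 ≤ x ⬝ᵥ ((M + α • N) *ᵥ x) := by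
  by_cases hpos : ∀ x : Fin n → ℝ, 0 ≤ x ⬝ᵥ (N *ᵥ x)
  · exact exists_of_nonneg M N hM hN hNS2 hNS3 hpos
  by_cases hneg : ∀ x : Fin n → ℝ, x ⬝ᵥ (N *ᵥ x) ≤ 0
  · obtain ⟨α, hα⟩ := exists_of_nonneg M (-N) hM hN.neg
      (fun x hx => hNS2 x (by simpa [neg_mulVec] using hx))
      (fun x hx => hNS3 x (by simpa [neg_mulVec] using hx))
      (fun x => by simpa [neg_mulVec] using hneg x)
    exact ⟨-α, fun x => by simpa using hα x⟩
  push Not at hpos hneg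
  obtain ⟨v₀, hv₀⟩ := hpos
  obtain ⟨u₀, hu₀⟩ := hneg
  let S : Set ℝ := {a | ∃ u : Fin n → ℝ, 0 < u ⬝ᵥ (N *ᵥ u) ∧
    a = -(u ⬝ᵥ (M *ᵥ u)) / (u ⬝ᵥ (N *ᵥ u))}
  have hSne : S.Nonempty := ⟨_, u₀, hu₀, rfl⟩
  have hub : ∀ v : Fin n → ℝ, v ⬝ᵥ (N *ᵥ v) < 0 →
      -(v ⬝ᵥ (M *ᵥ v)) / (v ⬝ᵥ (N *ᵥ v)) ∈ upperBounds S := by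
    rintro v hv _ ⟨u, hu, rfl⟩
    exact cross_bound hM hN hNS2 hu hv
  refine ⟨sSup S, fun x => ?_⟩
  rw [quad_pencil]
  rcases lt_trichotomy (x ⬝ᵥ (N *ᵥ x)) 0 with hx | hx | hx
  · have h := csSup_le hSne (hub x hx)
    rw [le_div_iff_of_neg hx] at h
    linarith
  · simpa [hx] using hNS2 x hx
  · have h := le_csSup ⟨_, hub v₀ hv₀⟩ (show _ ∈ S from ⟨x, hx, rfl⟩)
    rw [div_le_iff₀ hx] at h
    linarith
end

section
/- Let M, N be real symmetric n×n matrices with N ⪰ 0. If condition (NS2) holds (every x ∈ ℝⁿ with xᵀNx = 0 satisfies xᵀMx ≥ 0) and condition (NS3) holds (every x ∈ ℝⁿ with Nx = 0 and xᵀMx = 0 satisfies Mx = 0), then there exists α > 0 such that M + αN ⪰ 0. -/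
/-!
Let `L = ker M ∩ ker N` and let `C` be a linear complement of `L`. For every `α` the quadratic form
of `M + α N` takes the same value at `l + c` and at `c` (for `l ∈ L`, `c ∈ C`, by symmetry),
so only `C` matters, and by homogeneity only the unit sphere of `C`, which is compact. There the
form of `M` is strictly positive wherever that of `N` vanishes: by (NS2) it is nonnegative, and if
it were zero then (NS3) would put the vector into `L ∩ C = 0`. Hence the open sets
`{y | 0 < yᵀ M y + k yᵀ N y}`, increasing in `k ∈ ℕ`, cover the sphere, and one of them contains it.
-/

open Matrix

/-- If `N ⪰ 0` and (NS2), (NS3) hold, then `M + α N ⪰ 0` for some `α > 0`. -/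
theorem stmt_3 {n : ℕ} (M N : Matrix (Fin n) (Fin n) ℝ)
    (hM : M.IsSymm) (hN : N.IsSymm)
    (hNpsd : ∀ x : Fin n → ℝ, 0 ≤ x ⬝ᵥ (N *ᵥ x))
    (hNS2 : ∀ x : Fin n → ℝ, x ⬝ᵥ (N *ᵥ x) = 0 → 0 ≤ x ⬝ᵥ (M *ᵥ x))
    (hNS3 : ∀ x : Fin n → ℝ, N *ᵥ x = 0 → x ⬝ᵥ (M *ᵥ x) = 0 → M *ᵥ x = 0) :
    ∃ α : ℝ, 0 < α ∧ ∀ x : Fin n → ℝ, 0 ≤ x ⬝ᵥ ((M + α • N) *ᵥ x) := by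
  have hP : N.PosSemidef := by
    refine Matrix.PosSemidef.of_dotProduct_mulVec_nonneg ?_ ?_
    · rw [Matrix.IsHermitian, Matrix.conjTranspose_eq_transpose_of_trivial]
      exact hN
    · intro x
      simpa using hNpsd x
  have hker : ∀ x : Fin n → ℝ, x ⬝ᵥ (N *ᵥ x) = 0 → N *ᵥ x = 0 := by
    intro x hx
    exact (hP.dotProduct_mulVec_zero_iff x).1 (by simpa using hx)
  let L : Submodule ℝ (Fin n → ℝ) := LinearMap.ker M.mulVecLin ⊓ LinearMap.ker N.mulVecLin
  obtain ⟨C, hC⟩ := Submodule.exists_isCompl L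
  have hcpt : IsCompact (Metric.sphere (0 : Fin n → ℝ) 1 ∩ (C : Set (Fin n → ℝ))) :=
    (isCompact_sphere 0 1).inter_right C.closed_of_finiteDimensional
  obtain ⟨k, hk⟩ := hcpt.elim_directed_cover
    (fun k : ℕ => {y : Fin n → ℝ | 0 < y ⬝ᵥ (M *ᵥ y) + (k : ℝ) * (y ⬝ᵥ (N *ᵥ y))})
    (fun k => isOpen_lt (by fun_prop) (by fun_prop))
    (by
      rintro y ⟨hy1, hyC⟩
      rw [Set.mem_iUnion]
      rcases (hNpsd y).lt_or_eq with hpos | hzero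
      · obtain ⟨k, hk⟩ := exists_nat_gt (-(y ⬝ᵥ (M *ᵥ y)) / (y ⬝ᵥ (N *ᵥ y)))
        rw [div_lt_iff₀ hpos] at hk
        exact ⟨k, by simp only [Set.mem_ofPred_eq]; linarith⟩
      · refine ⟨0, ?_⟩
        have hNy := hker y hzero.symm
        have hne : y ⬝ᵥ (M *ᵥ y) ≠ 0 := by
          intro h0
          have hyL : y ∈ L := by
            simpa [L] using And.intro (hNS3 y hNy h0) hNy
          have hy0 : y = 0 := Submodule.disjoint_def.1 hC.disjoint y hyL hyC
          simp [hy0] at hy1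
        simpa using lt_of_le_of_ne (hNS2 y hzero.symm) hne.symm)
    (by
      refine Monotone.directed_le fun a b hab y hy => ?_
      simp only [Set.mem_ofPred_eq] at hy ⊢
      have : (a : ℝ) * (y ⬝ᵥ (N *ᵥ y)) ≤ (b : ℝ) * (y ⬝ᵥ (N *ᵥ y)) :=
        mul_le_mul_of_nonneg_right (by exact_mod_cast hab) (hNpsd y)
      linarith)
  -- `k` itself may be `0`, whereas `α` must be positive.
  refine ⟨(k : ℝ) + 1, by positivity, fun x => ?_⟩
  set A := M + ((k : ℝ) + 1) • N with hA
  have hAs : A.IsSymm := hM.add (hN.smul _)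
  have hAform : ∀ y : Fin n → ℝ,
      y ⬝ᵥ (A *ᵥ y) = y ⬝ᵥ (M *ᵥ y) + ((k : ℝ) + 1) * (y ⬝ᵥ (N *ᵥ y)) := by
    intro y
    simp [hA, Matrix.add_mulVec, Matrix.smul_mulVec, dotProduct_add]
  obtain ⟨l, hl, c, hc, rfl⟩ : ∃ l ∈ L, ∃ c ∈ C, l + c = x :=
    Submodule.mem_sup.1 (by rw [hC.sup_eq_top]; trivial)
  have hAl : A *ᵥ l = 0 := by
    have h : M *ᵥ l = 0 ∧ N *ᵥ l = 0 := by simpa [L] using hl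
    simp [hA, Matrix.add_mulVec, Matrix.smul_mulVec, h.1, h.2]
  have hlA : l ⬝ᵥ (A *ᵥ c) = 0 := by
    rw [Matrix.dotProduct_mulVec, ← Matrix.mulVec_transpose, hAs.eq, hAl, zero_dotProduct]
  rw [Matrix.mulVec_add, hAl, zero_add, add_dotProduct, hlA, zero_add]
  rcases eq_or_ne c 0 with rfl | hc0
  · simp
  have hn : 0 < ‖c‖ := norm_pos_iff.2 hc0
  have hmem := hk (show ‖c‖⁻¹ • c ∈ _ from
    ⟨by simp [norm_smul, hn.ne'], C.smul_mem _ hc⟩)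
  have hu : 0 ≤ (‖c‖⁻¹ • c) ⬝ᵥ (A *ᵥ (‖c‖⁻¹ • c)) := by
    rw [hAform]
    simp only [Set.mem_ofPred_eq] at hmem
    linarith [hNpsd (‖c‖⁻¹ • c)]
  rw [Matrix.mulVec_smul, smul_dotProduct, dotProduct_smul, smul_eq_mul, smul_eq_mul] at hu
  have hi : 0 < ‖c‖⁻¹ := inv_pos.2 hn
  exact nonneg_of_mul_nonneg_right (nonneg_of_mul_nonneg_right hu hi) hi
end

section
/- Let M, N be real symmetric n×n matrices with N ⪯ 0 (i.e., −N ⪰ 0). If condition (NS2) holds (every x ∈ ℝⁿ with xᵀNx = 0 satisfies xᵀMx ≥ 0) and condition (NS3) holds (every x ∈ ℝⁿ with Nx = 0 and xᵀMx = 0 satisfies Mx = 0), then there exists α < 0 such that M + αN ⪰ 0. -/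
/-!
Both quadratic forms are invariant under translation by `L = ker M ∩ ker N`, so it suffices to
work on a linear complement `C` of `L`, and by homogeneity on the compact unit sphere of `C`.
There the form of `M` is strictly positive wherever the form of `N` vanishes: since `-N ⪰ 0`, such
an `x` satisfies `N x = 0`, and (NS2) leaves only `xᵀ M x = 0`, in which case (NS3) would put `x`
in `L ∩ C = 0`. Compactness (`exists_penalty_of_isCompact`) then provides a uniform multiple of
`-N` making the sum nonnegative on the sphere, as in Finsler's lemma.
-/

open Matrix

/-- On a compact set, if `g ≥ 0` and `f > 0` on the zeros of `g`, then a large enough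
multiple of `g` compensates the negative values of `f`. -/
lemma exists_penalty_of_isCompact {E : Type*} [TopologicalSpace E] {S : Set E} (hS : IsCompact S)
    {f g : E → ℝ} (hf : Continuous f) (hg : Continuous g) (hg0 : ∀ x, 0 ≤ g x)
    (hfg : ∀ x ∈ S, g x = 0 → 0 < f x) :
    ∃ k : ℝ, 0 < k ∧ ∀ x ∈ S, 0 ≤ f x + k * g x := by
  have hT : IsCompact (S ∩ {x | f x ≤ 0}) := hS.inter_right (isClosed_le hf continuous_const)
  have hpos : ∀ x ∈ S ∩ {x | f x ≤ 0}, 0 < g x := fun x hx =>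
    lt_of_le_of_ne (hg0 x) fun h => absurd (hfg x hx.1 h.symm) (not_lt.mpr hx.2)
  obtain ⟨b, hb⟩ := hT.bddBelow_image
    (f := fun x => f x / g x) (hf.continuousOn.div hg.continuousOn fun x hx => (hpos x hx).ne')
  refine ⟨|b| + 1, by positivity, fun x hx => ?_⟩
  rcases le_total 0 (f x) with h | h
  · have := hg0 x
    positivity
  · have hgx := hpos x ⟨hx, h⟩
    have h1 : b ≤ f x / g x := hb ⟨x, ⟨hx, h⟩, rfl⟩
    rw [le_div_iff₀ hgx] at h1
    nlinarith [neg_abs_le b]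

lemma quadForm_add_of_mulVec_eq_zero {n : ℕ} {A : Matrix (Fin n) (Fin n) ℝ} (hA : A.IsSymm)
    {l : Fin n → ℝ} (hl : A *ᵥ l = 0) (y : Fin n → ℝ) :
    (l + y) ⬝ᵥ (A *ᵥ (l + y)) = y ⬝ᵥ (A *ᵥ y) := by
  have h : l ⬝ᵥ (A *ᵥ y) = 0 := by
    rw [dotProduct_mulVec, ← mulVec_transpose, hA.eq, hl, zero_dotProduct]
  rw [mulVec_add, hl, zero_add, add_dotProduct, h, zero_add]

/-- If `N ⪯ 0` and (NS2), (NS3) hold, then `M + α N ⪰ 0` for some `α < 0`. -/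
theorem stmt_4 {n : ℕ} (M N : Matrix (Fin n) (Fin n) ℝ)
    (hM : M.IsSymm) (hN : N.IsSymm)
    (hNnsd : ∀ x : Fin n → ℝ, x ⬝ᵥ (N *ᵥ x) ≤ 0)
    (hNS2 : ∀ x : Fin n → ℝ, x ⬝ᵥ (N *ᵥ x) = 0 → 0 ≤ x ⬝ᵥ (M *ᵥ x))
    (hNS3 : ∀ x : Fin n → ℝ, N *ᵥ x = 0 → x ⬝ᵥ (M *ᵥ x) = 0 → M *ᵥ x = 0) :
    ∃ α : ℝ, α < 0 ∧ ∀ x : Fin n → ℝ, 0 ≤ x ⬝ᵥ ((M + α • N) *ᵥ x) := by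
  have hker : ∀ x : Fin n → ℝ, x ⬝ᵥ (N *ᵥ x) = 0 → N *ᵥ x = 0 := by
    intro x hx
    have hP : (-N).PosSemidef := PosSemidef.of_dotProduct_mulVec_nonneg
      (by simp [IsHermitian, conjTranspose_eq_transpose_of_trivial, hN.eq])
      (fun y => by simpa [neg_mulVec] using hNnsd y)
    simpa [neg_mulVec] using (hP.dotProduct_mulVec_zero_iff x).1 (by simpa [neg_mulVec] using hx)
  obtain ⟨C, hC⟩ := (LinearMap.ker M.mulVecLin ⊓ LinearMap.ker N.mulVecLin).exists_isCompl
  have hS : IsCompact (Metric.sphere (0 : Fin n → ℝ) 1 ∩ C) :=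
    (isCompact_sphere 0 1).inter_right C.closed_of_finiteDimensional
  obtain ⟨k, hk, hkS⟩ := exists_penalty_of_isCompact hS
    (f := fun x => x ⬝ᵥ (M *ᵥ x)) (g := fun x => -(x ⬝ᵥ (N *ᵥ x)))
    (by fun_prop) (by fun_prop) (fun x => by simpa using hNnsd x) (by
      rintro x ⟨hx1, hxC⟩ hx
      have hx0 : x ⬝ᵥ (N *ᵥ x) = 0 := by simpa using hx
      refine lt_of_le_of_ne (hNS2 x hx0) fun h => ?_
      have hNx := hker x hx0
      have hMx := hNS3 x hNx h.symm
      have : x = 0 := Submodule.disjoint_def.1 hC.disjoint x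
        ⟨by simpa using hMx, by simpa using hNx⟩ hxC
      simp [this] at hx1)
  refine ⟨-k, by linarith, fun x => ?_⟩
  obtain ⟨l, ⟨hlM, hlN⟩, y, hy, rfl⟩ : ∃ l ∈ LinearMap.ker M.mulVecLin ⊓ LinearMap.ker N.mulVecLin,
      ∃ y ∈ C, l + y = x := Submodule.mem_sup.1 (hC.sup_eq_top ▸ Submodule.mem_top)
  have hlM' : M *ᵥ l = 0 := by simpa using hlM
  have hlN' : N *ᵥ l = 0 := by simpa using hlN
  rw [add_mulVec, dotProduct_add, smul_mulVec, dotProduct_smul,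
    quadForm_add_of_mulVec_eq_zero hM hlM', quadForm_add_of_mulVec_eq_zero hN hlN']
  rcases eq_or_ne y 0 with rfl | hy0
  · simp
  have hny : 0 < ‖y‖ := norm_pos_iff.2 hy0
  have h := hkS (‖y‖⁻¹ • y) ⟨by simp [norm_smul, hny.ne'], C.smul_mem _ hy⟩
  simp only [mulVec_smul, smul_dotProduct, dotProduct_smul, smul_eq_mul] at h ⊢
  have h2 : 0 ≤ (‖y‖⁻¹ * ‖y‖⁻¹) * (y ⬝ᵥ (M *ᵥ y) + -k * (y ⬝ᵥ (N *ᵥ y))) := by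
    linear_combination h
  exact nonneg_of_mul_nonneg_right h2 (by positivity)
end

section
/- Let M, N be real symmetric n×n matrices, suppose N is indefinite (there exist u, v ∈ ℝⁿ with uᵀNu > 0 and vᵀNv < 0), and suppose condition (NS2) holds: every x ∈ ℝⁿ with xᵀNx = 0 satisfies xᵀMx ≥ 0. Then condition (NS3) holds: every x ∈ ℝⁿ with Nx = 0 and xᵀMx = 0 satisfies Mx = 0. -/
/-!
Fix `x` with `N x = 0` and `xᵀ M x = 0`. If `y` is `N`-isotropic, so is `y + t x` for every real `t`,
and (NS2) gives `yᵀ M y + 2 t (xᵀ M y) ≥ 0` for all `t`, which forces `xᵀ M y = 0`. So the linear form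
`y ↦ xᵀ M y` vanishes on the isotropic vectors of `N`. These span the space because `N` is
indefinite: if `uᵀ N u > 0 > vᵀ N v`, the line `u + t v` meets the isotropic cone in two distinct
points, so a form vanishing on the cone kills both `u` and `v` (`form_eq_zero_of_isotropic`), and
every non-isotropic vector can be paired with a vector of the opposite sign. Hence `M x = 0`.
-/

open Matrix

theorem quadratic_add_smul {n : ℕ} {A : Matrix (Fin n) (Fin n) ℝ} (hA : A.IsSymm)
    (u v : Fin n → ℝ) (t : ℝ) :
    (u + t • v) ⬝ᵥ (A *ᵥ (u + t • v)) =
      u ⬝ᵥ (A *ᵥ u) + 2 * t * (v ⬝ᵥ (A *ᵥ u)) + t ^ 2 * (v ⬝ᵥ (A *ᵥ v)) := by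
  have hs : u ⬝ᵥ (A *ᵥ v) = v ⬝ᵥ (A *ᵥ u) := by
    rw [dotProduct_mulVec, ← mulVec_transpose, hA.eq, dotProduct_comm]
  simp only [mulVec_add, mulVec_smul, dotProduct_add, add_dotProduct, dotProduct_smul,
    smul_dotProduct, smul_eq_mul, hs]
  ring

/-- The isotropic points of the line `u + t v` correspond to the two distinct real roots of a quadratic
polynomial in `t` whose leading and constant coefficients have opposite signs. -/
theorem form_eq_zero_of_isotropic {n : ℕ} {N : Matrix (Fin n) (Fin n) ℝ} (hN : N.IsSymm)
    (w : Fin n → ℝ) (hw : ∀ y : Fin n → ℝ, y ⬝ᵥ (N *ᵥ y) = 0 → w ⬝ᵥ y = 0)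
    {u v : Fin n → ℝ} (hu : 0 < u ⬝ᵥ (N *ᵥ u)) (hv : v ⬝ᵥ (N *ᵥ v) < 0) :
    w ⬝ᵥ u = 0 ∧ w ⬝ᵥ v = 0 := by
  have key : ∀ t : ℝ, u ⬝ᵥ (N *ᵥ u) + 2 * t * (v ⬝ᵥ (N *ᵥ u)) + t ^ 2 * (v ⬝ᵥ (N *ᵥ v)) = 0 →
      w ⬝ᵥ u + t * (w ⬝ᵥ v) = 0 := by
    intro t ht
    have h := hw (u + t • v) (by rw [quadratic_add_smul hN, ht])
    simpa [dotProduct_add, dotProduct_smul] using h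
  generalize u ⬝ᵥ (N *ᵥ u) = a at *
  generalize v ⬝ᵥ (N *ᵥ u) = b at *
  generalize v ⬝ᵥ (N *ᵥ v) = c at *
  have hD : 0 < b ^ 2 - a * c := by nlinarith [sq_nonneg b, mul_pos hu (neg_pos.mpr hv)]
  have hs := Real.sq_sqrt hD.le
  have hs0 := Real.sqrt_pos.mpr hD
  generalize √(b ^ 2 - a * c) = s at *
  have hc := hv.ne
  have h1 := key ((-b + s) / c) (by field_simp; linear_combination hs)
  have h2 := key ((-b - s) / c) (by field_simp; linear_combination hs)
  have hv0 : w ⬝ᵥ v = 0 := by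
    have h3 : (2 * s / c) * (w ⬝ᵥ v) = 0 := by linear_combination h1 - h2
    exact (mul_eq_zero.mp h3).resolve_left (div_ne_zero (by positivity) hv.ne)
  exact ⟨by simpa [hv0] using h1, hv0⟩

/-- If `N` is indefinite and (NS2) holds, then (NS3) holds. -/
theorem stmt_7 {n : ℕ} (M N : Matrix (Fin n) (Fin n) ℝ)
    (hM : M.IsSymm) (hN : N.IsSymm)
    (hind : ∃ u v : Fin n → ℝ, 0 < u ⬝ᵥ (N *ᵥ u) ∧ v ⬝ᵥ (N *ᵥ v) < 0)
    (hNS2 : ∀ x : Fin n → ℝ, x ⬝ᵥ (N *ᵥ x) = 0 → 0 ≤ x ⬝ᵥ (M *ᵥ x)) :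
    ∀ x : Fin n → ℝ, N *ᵥ x = 0 → x ⬝ᵥ (M *ᵥ x) = 0 → M *ᵥ x = 0 := by
  intro x hNx hMx
  obtain ⟨u, v, hu, hv⟩ := hind
  have hsymm : ∀ (A : Matrix (Fin n) (Fin n) ℝ), A.IsSymm → ∀ y, x ⬝ᵥ (A *ᵥ y) = (A *ᵥ x) ⬝ᵥ y := by
    intro A hA y
    rw [dotProduct_mulVec, ← mulVec_transpose, hA.eq]
  have hw : ∀ y : Fin n → ℝ, y ⬝ᵥ (N *ᵥ y) = 0 → (M *ᵥ x) ⬝ᵥ y = 0 := by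
    intro y hy
    have h : ∀ t : ℝ, 0 ≤ y ⬝ᵥ (M *ᵥ y) + 2 * t * ((M *ᵥ x) ⬝ᵥ y) := by
      intro t
      have h := hNS2 (y + t • x) (by
        rw [quadratic_add_smul hN, hy, hsymm N hN, hsymm N hN, hNx]; simp)
      rw [quadratic_add_smul hM, hMx, hsymm M hM] at h
      simpa using h
    by_contra hne
    -- At this `t` the affine function of `t` in `h` takes the value `-1`.
    have h' := h (-(y ⬝ᵥ (M *ᵥ y) + 1) / (2 * ((M *ᵥ x) ⬝ᵥ y)))
    field_simp at h'
    linarith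
  refine dotProduct_eq_zero _ fun z => ?_
  rcases lt_trichotomy (z ⬝ᵥ (N *ᵥ z)) 0 with hz | hz | hz
  · exact (form_eq_zero_of_isotropic hN _ hw hu hz).2
  · exact hw z hz
  · exact (form_eq_zero_of_isotropic hN _ hw hz hv).1
end

section
/- Let N be a real symmetric n×n matrix that is indefinite, i.e., there exist u, v ∈ ℝⁿ with uᵀNu > 0 and vᵀNv < 0. Then for every nonzero z ∈ ℝⁿ there exists y ∈ ℝⁿ with yᵀNy = 0 and yᵀz ≠ 0. -/
open Matrix

/-!
If every isotropic vector of `N` is orthogonal to `z`, then every vector is: a positive vector `p`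
and a negative vector `m` are both linear combinations of two isotropic vectors, because
`t ↦ Q (p + t m)` is a quadratic with two distinct real roots (`orthogonal_of_isotropic`). Applied
to `z` itself, which is positive, negative or isotropic, this gives `z ⬝ᵥ z = 0`, so `z = 0`.
-/

/-- A vector orthogonal to all isotropic vectors of `N` is orthogonal to every positive vector `p`
and every negative vector `m`: the line `p + t m` contains two distinct isotropic vectors. -/
lemma orthogonal_of_isotropic {n : ℕ} (N : Matrix (Fin n) (Fin n) ℝ) (hN : N.IsSymm)
    {z p m : Fin n → ℝ} (hz : ∀ y : Fin n → ℝ, y ⬝ᵥ (N *ᵥ y) = 0 → y ⬝ᵥ z = 0)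
    (hp : 0 < p ⬝ᵥ (N *ᵥ p)) (hm : m ⬝ᵥ (N *ᵥ m) < 0) : p ⬝ᵥ z = 0 ∧ m ⬝ᵥ z = 0 := by
  have hsymm : m ⬝ᵥ (N *ᵥ p) = p ⬝ᵥ (N *ᵥ m) := by
    rw [dotProduct_mulVec, ← mulVec_transpose, hN.eq, dotProduct_comm]
  have hroot (t : ℝ) (ht : p ⬝ᵥ (N *ᵥ p) + 2 * t * (p ⬝ᵥ (N *ᵥ m))
      + t ^ 2 * (m ⬝ᵥ (N *ᵥ m)) = 0) : p ⬝ᵥ z + t * (m ⬝ᵥ z) = 0 := by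
    have h := hz (p + t • m) (by
      simp only [mulVec_add, mulVec_smul, dotProduct_add, add_dotProduct, smul_dotProduct,
        dotProduct_smul, smul_eq_mul, hsymm]
      linear_combination ht)
    simpa [add_dotProduct] using h
  generalize p ⬝ᵥ (N *ᵥ p) = a at *
  generalize p ⬝ᵥ (N *ᵥ m) = b at *
  generalize m ⬝ᵥ (N *ᵥ m) = c at *
  have hD : 0 < b ^ 2 - a * c := by nlinarith [mul_pos hp (neg_pos.2 hm), sq_nonneg b]
  have hs := Real.sqrt_pos.2 hD
  have hsq := Real.sq_sqrt hD.le
  generalize √(b ^ 2 - a * c) = s at *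
  have hc : c ≠ 0 := hm.ne
  have h1 := hroot ((-b + s) / c) (by field_simp; linear_combination hsq)
  have h2 := hroot ((-b - s) / c) (by field_simp; linear_combination hsq)
  have hmz : m ⬝ᵥ z = 0 := by
    have h : 2 * s / c * (m ⬝ᵥ z) = 0 := by linear_combination h1 - h2
    exact (mul_eq_zero.1 h).resolve_left (by positivity)
  exact ⟨by simpa [hmz] using h1, hmz⟩

/-- If `N` is a symmetric indefinite matrix, then for every nonzero `z` there
exists `y` with `yᵀ N y = 0` and `yᵀ z ≠ 0`. -/
theorem stmt_8 {n : ℕ} (N : Matrix (Fin n) (Fin n) ℝ) (hN : N.IsSymm)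
    (hind : ∃ u v : Fin n → ℝ, 0 < u ⬝ᵥ (N *ᵥ u) ∧ v ⬝ᵥ (N *ᵥ v) < 0) :
    ∀ z : Fin n → ℝ, z ≠ 0 → ∃ y : Fin n → ℝ, y ⬝ᵥ (N *ᵥ y) = 0 ∧ y ⬝ᵥ z ≠ 0 := by
  obtain ⟨u, v, hu, hv⟩ := hind
  intro z hz0
  by_contra! hz
  refine hz0 (dotProduct_self_eq_zero.1 ?_)
  rcases lt_trichotomy (z ⬝ᵥ (N *ᵥ z)) 0 with h | h | h
  · exact (orthogonal_of_isotropic N hN hz hu h).2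
  · exact hz z h
  · exact (orthogonal_of_isotropic N hN hz h hv).1
end

section
/- Let U be a real m×n matrix and Q a real symmetric n×n matrix. Suppose (i) every x ∈ ℝⁿ with Ux = 0 satisfies xᵀQx ≥ 0, and (ii) every x ∈ ℝⁿ with Ux = 0 and xᵀQx = 0 satisfies Qx = 0. Then there exists α > 0 such that Q + α UᵀU ⪰ 0; in particular, X = (α/2) U satisfies Q + UᵀX + XᵀU ⪰ 0. -/
open Matrix

/-! Let `N = ker U ∩ ker Q` and let `W` be any linear complement of `N`. Since `Q` is symmetric,
the form `x ↦ xᵀQx + α |Ux|²` does not change when a vector of `N` is added to `x`, so it is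
enough to make it nonnegative on `W`, hence, by homogeneity, on the compact set `S` of unit
vectors of `W`. The open sets `{x | 0 < xᵀQx + (k + 1) |Ux|²}` increase with `k` and cover `S`: a
point with `Ux ≠ 0` lies in the set for large `k`, and a point of `S` with `Ux = 0` satisfies
`xᵀQx > 0`, because otherwise (i) and (ii) would put it in `N ∩ W = 0`. By compactness a single
`k` works on all of `S`, and `α = k + 1`. -/

theorem dotProduct_add_smul_mulVec {m n : ℕ} (U : Matrix (Fin m) (Fin n) ℝ)
    (Q : Matrix (Fin n) (Fin n) ℝ) (α : ℝ) (x : Fin n → ℝ) :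
    x ⬝ᵥ ((Q + α • (Uᵀ * U)) *ᵥ x) = x ⬝ᵥ (Q *ᵥ x) + α * ((U *ᵥ x) ⬝ᵥ (U *ᵥ x)) := by
  rw [add_mulVec, dotProduct_add, smul_mulVec, dotProduct_smul, smul_eq_mul, ← mulVec_mulVec,
    dotProduct_mulVec x Uᵀ, vecMul_transpose]

/-- One constant makes the form positive on all unit vectors of a subspace `W` that meets
`ker U ∩ ker Q` trivially. -/
theorem exists_pos_on_sphere {m n : ℕ} (U : Matrix (Fin m) (Fin n) ℝ)
    (Q : Matrix (Fin n) (Fin n) ℝ)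
    (h1 : ∀ x : Fin n → ℝ, U *ᵥ x = 0 → 0 ≤ x ⬝ᵥ (Q *ᵥ x))
    (h2 : ∀ x : Fin n → ℝ, U *ᵥ x = 0 → x ⬝ᵥ (Q *ᵥ x) = 0 → Q *ᵥ x = 0)
    (W : Submodule ℝ (Fin n → ℝ))
    (hW : ∀ x ∈ W, U *ᵥ x = 0 → Q *ᵥ x = 0 → x = 0) :
    ∃ α : ℝ, 0 < α ∧ ∀ x ∈ W, ‖x‖ = 1 →
      0 < x ⬝ᵥ (Q *ᵥ x) + α * ((U *ᵥ x) ⬝ᵥ (U *ᵥ x)) := by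
  have hS : IsCompact (Metric.sphere (0 : Fin n → ℝ) 1 ∩ (W : Set (Fin n → ℝ))) :=
    (isCompact_sphere _ _).inter_right W.closed_of_finiteDimensional
  obtain ⟨k, hk⟩ := hS.elim_directed_cover
    (fun k : ℕ => {x : Fin n → ℝ |
      0 < x ⬝ᵥ (Q *ᵥ x) + ((k : ℝ) + 1) * ((U *ᵥ x) ⬝ᵥ (U *ᵥ x))})
    (fun k => isOpen_lt continuous_const (by fun_prop))
    (by
      rintro x ⟨hx, hxW⟩
      simp only [Set.mem_iUnion, Set.mem_ofPred_eq]
      have hx1 : ‖x‖ = 1 := by simpa using hx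
      by_cases hU : U *ᵥ x = 0
      · refine ⟨0, ?_⟩
        have hne : x ⬝ᵥ (Q *ᵥ x) ≠ 0 := fun h => by
          simp [hW x hxW hU (h2 x hU h)] at hx1
        simpa [hU] using lt_of_le_of_ne (h1 x hU) hne.symm
      · have hpos : 0 < (U *ᵥ x) ⬝ᵥ (U *ᵥ x) :=
          lt_of_le_of_ne (Finset.sum_nonneg fun i _ => mul_self_nonneg _)
            fun h => hU (dotProduct_self_eq_zero.mp h.symm)
        obtain ⟨k, hk⟩ := exists_nat_gt (-(x ⬝ᵥ (Q *ᵥ x)) / ((U *ᵥ x) ⬝ᵥ (U *ᵥ x)))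
        rw [div_lt_iff₀ hpos] at hk
        exact ⟨k, by linarith⟩)
    (directed_of_isDirected_le fun i j hij x hx => by
      have hpos : 0 ≤ (U *ᵥ x) ⬝ᵥ (U *ᵥ x) := Finset.sum_nonneg fun i _ => mul_self_nonneg _
      have hij' : (i : ℝ) ≤ j := by exact_mod_cast hij
      simp only [Set.mem_ofPred_eq] at hx ⊢
      nlinarith [mul_le_mul_of_nonneg_right hij' hpos])
  exact ⟨k + 1, by positivity, fun x hxW hx => hk ⟨by simpa using hx, hxW⟩⟩

/-- Under conditions (i) and (ii), there exists `α > 0` with `Q + α Uᵀ U ⪰ 0`;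
in particular `X = (α/2) U` satisfies `Q + Uᵀ X + Xᵀ U ⪰ 0`. -/
theorem stmt_11 {m n : ℕ} (U : Matrix (Fin m) (Fin n) ℝ)
    (Q : Matrix (Fin n) (Fin n) ℝ) (hQ : Q.IsSymm)
    (h1 : ∀ x : Fin n → ℝ, U *ᵥ x = 0 → 0 ≤ x ⬝ᵥ (Q *ᵥ x))
    (h2 : ∀ x : Fin n → ℝ, U *ᵥ x = 0 → x ⬝ᵥ (Q *ᵥ x) = 0 → Q *ᵥ x = 0) :
    ∃ α : ℝ, 0 < α ∧
      (∀ x : Fin n → ℝ, 0 ≤ x ⬝ᵥ ((Q + α • (Uᵀ * U)) *ᵥ x)) ∧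
      (∀ x : Fin n → ℝ,
        0 ≤ x ⬝ᵥ ((Q + Uᵀ * ((α / 2) • U) + ((α / 2) • U)ᵀ * U) *ᵥ x)) := by
  obtain ⟨W, hW⟩ := Submodule.exists_isCompl
    (LinearMap.ker U.mulVecLin ⊓ LinearMap.ker Q.mulVecLin)
  obtain ⟨α, hα, hpos⟩ := exists_pos_on_sphere U Q h1 h2 W fun x hx hU hQx =>
    Submodule.disjoint_def.mp hW.disjoint x ⟨by simpa using hU, by simpa using hQx⟩ hx
  have key : ∀ x : Fin n → ℝ, 0 ≤ x ⬝ᵥ ((Q + α • (Uᵀ * U)) *ᵥ x) := by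
    intro x
    rw [dotProduct_add_smul_mulVec]
    obtain ⟨y, hy, z, hz, rfl⟩ := Submodule.mem_sup.mp
      (hW.sup_eq_top ▸ Submodule.mem_top : x ∈ _ ⊔ W)
    have hUy : U *ᵥ y = 0 := by simpa using hy.1
    have hQy : Q *ᵥ y = 0 := by simpa using hy.2
    have hyQ : y ⬝ᵥ (Q *ᵥ z) = 0 := by
      rw [dotProduct_mulVec, ← mulVec_transpose, hQ.eq, hQy, zero_dotProduct]
    rw [mulVec_add, mulVec_add, hUy, hQy, zero_add, zero_add, add_dotProduct, hyQ, zero_add]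
    rcases eq_or_ne z 0 with rfl | hz0
    · simp
    have hn : 0 < ‖z‖ := norm_pos_iff.mpr hz0
    have h := hpos (‖z‖⁻¹ • z) (W.smul_mem _ hz) (by
      rw [norm_smul, norm_inv, norm_norm, inv_mul_cancel₀ hn.ne'])
    simp only [mulVec_smul, dotProduct_smul, smul_dotProduct, smul_eq_mul] at h
    have h' : 0 < (‖z‖⁻¹ * ‖z‖⁻¹) *
        (z ⬝ᵥ (Q *ᵥ z) + α * ((U *ᵥ z) ⬝ᵥ (U *ᵥ z))) := by
      linarith
    exact (pos_of_mul_pos_right h' (by positivity)).le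
  refine ⟨α, hα, key, fun x => ?_⟩
  have hX : Q + Uᵀ * ((α / 2) • U) + ((α / 2) • U)ᵀ * U = Q + α • (Uᵀ * U) := by
    rw [transpose_smul, Matrix.mul_smul, Matrix.smul_mul, add_assoc, ← add_smul, add_halves]
  rw [hX]
  exact key x
end

section
/- (Non-strict projection lemma) Let U be a real m×n matrix, V a real p×n matrix, and Q a real symmetric n×n matrix. Then there exists a real m×p matrix X satisfying Q + UᵀXV + VᵀXᵀU ⪰ 0 if and only if all of the following hold: (i) every x ∈ ℝⁿ with Ux = 0 satisfies xᵀQx ≥ 0; (ii) every x ∈ ℝⁿ with Vx = 0 satisfies xᵀQx ≥ 0; (iii) every x ∈ ℝⁿ with Ux = 0, Vx = 0 and xᵀQx = 0 satisfies Qx = 0. -/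
/-!
Write `K = ker U ∩ ker V`.

*Necessity.* If `P = Q + Uᵀ X V + Vᵀ Xᵀ U` is positive semidefinite, then `P` and `Q` define the
same quadratic form on `ker U` and on `ker V`, and `P x = Q x` on `K`; moreover `xᵀ P x = 0` forces
`P x = 0`.

*Sufficiency.* Regard `Q` as a symmetric bilinear form `B`. By (i) and (iii), `B` is positive
definite on a complement of `ker B ∩ K` in `K`, so there is a linear `π : E → K` with `x - π x`
orthogonal to `K` for all `x` (`exists_proj`). On the other hand every `x` splits as
`x = k + a + b + c` with `k ∈ K`, `a ∈ ker U` a linear function of `V x`, `b ∈ ker V` a linear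
function of `U x`, and `c` a linear function both of `U x` and of `V x` (`exists_decomp`; `c` is the
component of `x` in a complement of `ker U + ker V`). Subtracting from `a, b, c` their images
under `π` makes them orthogonal to `K` and keeps these properties, whence
`B x x = B (π x) (π x) + B (a + b + c) (a + b + c)`. In the expansion of the last term every
contribution except `B a a` and `B b b` is, up to symmetry, a bilinear function of `(U x, V x)`, so
`X` can be chosen to cancel all of them. What remains, `B (π x) (π x) + B a a + B b b`, is
nonnegative by (i) and (ii).
-/

open Matrix

section Abstract

variable {E F G : Type*} [AddCommGroup E] [Module ℝ E] [AddCommGroup F] [Module ℝ F]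
  [AddCommGroup G] [Module ℝ G]

lemma exists_pseudoInverse (L : E →ₗ[ℝ] F) : ∃ h : F →ₗ[ℝ] E, ∀ x, L (h (L x)) = L x := by
  obtain ⟨g, hg⟩ := L.rangeRestrict.exists_rightInverse_of_surjective L.range_rangeRestrict
  obtain ⟨h, hh⟩ := LinearMap.exists_extend g
  refine ⟨h, fun x => ?_⟩
  have h1 : h (L x) = g (L.rangeRestrict x) := LinearMap.congr_fun hh (L.rangeRestrict x)
  rw [h1]
  exact congrArg Subtype.val (LinearMap.congr_fun hg (L.rangeRestrict x))

/-- A map vanishing on `ker U` factors through `U`. -/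
lemma exists_factor (U : E →ₗ[ℝ] F) (P : E →ₗ[ℝ] G) (hP : ∀ x, U x = 0 → P x = 0) :
    ∃ C : F →ₗ[ℝ] G, ∀ x, C (U x) = P x := by
  obtain ⟨h, hh⟩ := exists_pseudoInverse U
  refine ⟨P ∘ₗ h, fun x => ?_⟩
  have := hP (h (U x) - x) (by rw [map_sub, hh, sub_self])
  rw [map_sub, sub_eq_zero] at this
  exact this

/-- The splitting `x = k + a + b + c` with `a = g (V x) ∈ ker U`, `b = f (U x) ∈ ker V`,
`c = C₁ (U x) = C₂ (V x)` and `k ∈ ker U ∩ ker V`. -/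
lemma exists_decomp (U : E →ₗ[ℝ] F) (V : E →ₗ[ℝ] G) :
    ∃ (f : F →ₗ[ℝ] E) (g : G →ₗ[ℝ] E) (C₁ : F →ₗ[ℝ] E) (C₂ : G →ₗ[ℝ] E),
      (∀ v, U (g v) = 0) ∧ (∀ u, V (f u) = 0) ∧ (∀ x, C₁ (U x) = C₂ (V x)) ∧
      (∀ x, U (x - (g (V x) + f (U x) + C₁ (U x))) = 0) ∧
      (∀ x, V (x - (g (V x) + f (U x) + C₁ (U x))) = 0) := by
  -- `P` is a projection with kernel `ker U + ker V`
  obtain ⟨h, hh⟩ := exists_pseudoInverse (LinearMap.ker U ⊔ LinearMap.ker V).mkQ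
  set P : E →ₗ[ℝ] E := h ∘ₗ (LinearMap.ker U ⊔ LinearMap.ker V).mkQ with hPdef
  have hP0 : ∀ x ∈ LinearMap.ker U ⊔ LinearMap.ker V, P x = 0 := by
    intro x hx
    have : (LinearMap.ker U ⊔ LinearMap.ker V).mkQ x = 0 := by simpa using hx
    simp only [hPdef, LinearMap.comp_apply, this, map_zero]
  have hP1 : ∀ x, x - P x ∈ LinearMap.ker U ⊔ LinearMap.ker V := by
    intro x
    rw [← Submodule.ker_mkQ (LinearMap.ker U ⊔ LinearMap.ker V), LinearMap.mem_ker, map_sub,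
      sub_eq_zero]
    exact (hh x).symm
  obtain ⟨C₁, hC₁⟩ := exists_factor U P (fun x hx => hP0 x (Submodule.mem_sup_left hx))
  obtain ⟨C₂, hC₂⟩ := exists_factor V P (fun x hx => hP0 x (Submodule.mem_sup_right hx))
  obtain ⟨g, hg⟩ := exists_pseudoInverse (V ∘ₗ (LinearMap.ker U).subtype)
  obtain ⟨f, hf⟩ := exists_pseudoInverse (U ∘ₗ (LinearMap.ker V).subtype)
  have hgU : ∀ v, U (g v) = 0 := fun v => (g v).2
  have hfV : ∀ u, V (f u) = 0 := fun u => (f u).2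
  -- `g` inverts `V` on `V (ker U)` and `f` inverts `U` on `U (ker V)`
  have hgV : ∀ x, V (g (V (x - P x))) = V (x - P x) := by
    intro x
    obtain ⟨w, hw, z, hz, hwz⟩ := Submodule.mem_sup.1 (hP1 x)
    rw [← hwz, map_add, LinearMap.mem_ker.1 hz, add_zero]
    exact hg ⟨w, hw⟩
  have hfU : ∀ x, U (f (U (x - P x))) = U (x - P x) := by
    intro x
    obtain ⟨w, hw, z, hz, hwz⟩ := Submodule.mem_sup.1 (hP1 x)
    rw [← hwz, map_add, LinearMap.mem_ker.1 hw, zero_add]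
    exact hf ⟨z, hz⟩
  refine ⟨(LinearMap.ker V).subtype ∘ₗ f ∘ₗ (LinearMap.id - U ∘ₗ C₁),
    (LinearMap.ker U).subtype ∘ₗ g ∘ₗ (LinearMap.id - V ∘ₗ C₂), C₁, C₂,
    fun v => hgU _, fun u => hfV _, fun x => by rw [hC₁, hC₂], fun x => ?_, fun x => ?_⟩
  · have h1 := hfU x
    have h2 := hgU (V x - V (P x))
    simp only [LinearMap.comp_apply, LinearMap.sub_apply, LinearMap.id_apply, hC₁, hC₂,
      Submodule.subtype_apply, map_sub, map_add] at h1 h2 ⊢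
    simp only [Submodule.coe_sub, map_sub] at h1 h2 ⊢
    rw [h1, h2]; abel
  · have h1 := hgV x
    have h2 := hfV (U x - U (P x))
    simp only [LinearMap.comp_apply, LinearMap.sub_apply, LinearMap.id_apply, hC₁, hC₂,
      Submodule.subtype_apply, map_sub, map_add] at h1 h2 ⊢
    simp only [Submodule.coe_sub, map_sub] at h1 h2 ⊢
    rw [h1, h2]; abel

/-- If isotropic vectors of `K` lie in the radical of `B`, then `B`-orthogonal projection to `K`
exists, although `B` may be degenerate on `K`: project to a complement of `ker B ∩ K` in `K`. -/
lemma exists_proj [FiniteDimensional ℝ E] (B : LinearMap.BilinForm ℝ E) (hB : ∀ x y, B x y = B y x)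
    (K : Submodule ℝ E) (hK : ∀ x ∈ K, B x x = 0 → B x = 0) :
    ∃ π : E →ₗ[ℝ] E, (∀ x, π x ∈ K) ∧ ∀ x, ∀ k ∈ K, B k (x - π x) = 0 := by
  obtain ⟨C, hC⟩ := Submodule.exists_isCompl (LinearMap.ker B ⊓ K)
  have hnd : (B.restrict (C ⊓ K)).Nondegenerate := by
    have key : ∀ x : ↥(C ⊓ K), B x x = 0 → x = 0 := by
      intro x hx
      have h1 : (x : E) ∈ LinearMap.ker B ⊓ K := ⟨hK x x.2.2 hx, x.2.2⟩
      exact Subtype.ext (Submodule.disjoint_def.1 hC.disjoint _ h1 x.2.1)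
    exact ⟨fun x hx => key x (hx x), fun x hx => key x (hx x)⟩
  have hrefl : B.IsRefl := fun x y h => by rw [hB, h]
  have hcompl := LinearMap.BilinForm.isCompl_orthogonal_of_restrict_nondegenerate hrefl hnd
  obtain ⟨h, hh⟩ := exists_pseudoInverse
    ((B.orthogonal (C ⊓ K)).mkQ ∘ₗ (C ⊓ K).subtype)
  refine ⟨(C ⊓ K).subtype ∘ₗ h ∘ₗ (B.orthogonal (C ⊓ K)).mkQ, fun x => (h _).2.2, ?_⟩
  intro x k hk
  have horth : x - (h ((B.orthogonal (C ⊓ K)).mkQ x) : E) ∈ B.orthogonal (C ⊓ K) := by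
    have hx : x ∈ (C ⊓ K) ⊔ B.orthogonal (C ⊓ K) := by rw [hcompl.sup_eq_top]; trivial
    obtain ⟨w, hw, z, hz, rfl⟩ := Submodule.mem_sup.1 hx
    have hz' : (B.orthogonal (C ⊓ K)).mkQ z = 0 := by simpa using hz
    rw [← Submodule.Quotient.mk_eq_zero, ← Submodule.mkQ_apply, map_sub, map_add, hz',
      add_zero, sub_eq_zero]
    exact (hh ⟨w, hw⟩).symm
  have hk' : k ∈ (LinearMap.ker B ⊓ K) ⊔ C := by rw [hC.sup_eq_top]; trivial
  obtain ⟨r, hr, c, hc, rfl⟩ := Submodule.mem_sup.1 hk'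
  have hcK : c ∈ K := by simpa using K.sub_mem hk hr.2
  have h1 : B r = 0 := hr.1
  have h2 := LinearMap.BilinForm.mem_orthogonal_iff.1 horth c ⟨hc, hcK⟩
  rw [map_add, LinearMap.add_apply, h1, LinearMap.zero_apply, zero_add]
  exact h2

/-- Sufficiency, in coordinate-free form. -/
lemma exists_bilin [FiniteDimensional ℝ E] (B : LinearMap.BilinForm ℝ E)
    (hB : ∀ x y, B x y = B y x) (U : E →ₗ[ℝ] F) (V : E →ₗ[ℝ] G)
    (h1 : ∀ x, U x = 0 → 0 ≤ B x x) (h2 : ∀ x, V x = 0 → 0 ≤ B x x)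
    (h3 : ∀ x, U x = 0 → V x = 0 → B x x = 0 → B x = 0) :
    ∃ β : F →ₗ[ℝ] G →ₗ[ℝ] ℝ, ∀ x, 0 ≤ B x x + 2 * β (U x) (V x) := by
  obtain ⟨π, hπK, hπ⟩ := exists_proj B hB (LinearMap.ker U ⊓ LinearMap.ker V)
    (fun x hx => h3 x hx.1 hx.2)
  obtain ⟨f, g, C₁, C₂, hg, hf, hC, hkU, hkV⟩ := exists_decomp U V
  have hπU : ∀ x, U (π x) = 0 := fun x => (hπK x).1
  have hπV : ∀ x, V (π x) = 0 := fun x => (hπK x).2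
  set ρ : E →ₗ[ℝ] E := LinearMap.id - π with hρ
  have hρx : ∀ x, ρ x = x - π x := fun x => rfl
  refine ⟨-(B.compl₁₂ (ρ ∘ₗ f) (ρ ∘ₗ g) + B.compl₁₂ (ρ ∘ₗ C₁) (ρ ∘ₗ g)
    + B.compl₁₂ (ρ ∘ₗ f) (ρ ∘ₗ C₂) + (1 / 2 : ℝ) • B.compl₁₂ (ρ ∘ₗ C₁) (ρ ∘ₗ C₂)), fun x => ?_⟩
  simp only [LinearMap.neg_apply, LinearMap.add_apply, LinearMap.smul_apply,
    LinearMap.compl₁₂_apply, LinearMap.comp_apply, smul_eq_mul, ← hC x]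
  set k := x - (g (V x) + f (U x) + C₁ (U x)) with hk
  set a := ρ (g (V x)) with ha
  set b := ρ (f (U x)) with hb
  set c := ρ (C₁ (U x)) with hc
  have hUa : U a = 0 := by rw [ha, hρx, map_sub, hg, hπU, sub_zero]
  have hVb : V b = 0 := by rw [hb, hρx, map_sub, hf, hπV, sub_zero]
  -- `ρ x` and `a + b + c` are both orthogonal to `K` and differ by the element `ρ k` of `K`
  have hkK : ρ k ∈ LinearMap.ker U ⊓ LinearMap.ker V :=
    Submodule.sub_mem _ ⟨hkU x, hkV x⟩ (hπK k)
  have hx : x = π x + (ρ k + (a + b + c)) := by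
    have e : ρ x = ρ k + (a + b + c) := by
      rw [ha, hb, hc, ← map_add, ← map_add, ← map_add]; congr 1; rw [hk]; abel
    rw [← e, hρx]; abel
  have habc : a + b + c = ρ (g (V x) + f (U x) + C₁ (U x)) := by rw [map_add, map_add]
  have e1 : B (π x) (ρ k) = 0 := hπ k _ (hπK x)
  have e2 : B (π x) (a + b + c) = 0 := by rw [habc]; exact hπ _ _ (hπK x)
  have e3 : B (ρ k) (ρ k) = 0 := hπ k _ hkK
  have e4 : B (ρ k) (a + b + c) = 0 := by rw [habc]; exact hπ _ _ hkK
  have e5 : B x x = B (π x) (π x) + B (a + b + c) (a + b + c) := by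
    have : B x x = B (π x + (ρ k + (a + b + c))) (π x + (ρ k + (a + b + c))) := by rw [← hx]
    rw [this]
    generalize a + b + c = s at e2 e4 ⊢
    simp only [map_add, LinearMap.add_apply, hB s (π x), hB s (ρ k), hB (ρ k) (π x), e1, e2, e3, e4]
    ring
  have e6 : B (a + b + c) (a + b + c)
      = B a a + B b b + B c c + 2 * B b a + 2 * B c a + 2 * B b c := by
    simp only [map_add, LinearMap.add_apply]
    rw [hB a b, hB a c, hB c b]; ring
  have p0 := h1 (π x) (hπU x)
  have p1 := h1 a hUa
  have p2 := h2 b hVb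
  rw [e5, e6]
  linarith

end Abstract

lemma quadForm_eq {m n p : ℕ} (U : Matrix (Fin m) (Fin n) ℝ) (V : Matrix (Fin p) (Fin n) ℝ)
    (Q : Matrix (Fin n) (Fin n) ℝ) (X : Matrix (Fin m) (Fin p) ℝ) (x : Fin n → ℝ) :
    x ⬝ᵥ ((Q + Uᵀ * X * V + Vᵀ * Xᵀ * U) *ᵥ x)
      = x ⬝ᵥ (Q *ᵥ x) + 2 * ((U *ᵥ x) ⬝ᵥ (X *ᵥ (V *ᵥ x))) := by
  have e1 : x ⬝ᵥ ((Uᵀ * X * V) *ᵥ x) = (U *ᵥ x) ⬝ᵥ (X *ᵥ (V *ᵥ x)) := by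
    rw [← mulVec_mulVec, ← mulVec_mulVec, dotProduct_mulVec x Uᵀ, vecMul_transpose]
  have e2 : x ⬝ᵥ ((Vᵀ * Xᵀ * U) *ᵥ x) = (U *ᵥ x) ⬝ᵥ (X *ᵥ (V *ᵥ x)) := by
    rw [← mulVec_mulVec, ← mulVec_mulVec, dotProduct_mulVec x Vᵀ, vecMul_transpose,
      dotProduct_mulVec, vecMul_transpose, dotProduct_comm]
  rw [add_mulVec, add_mulVec, dotProduct_add, dotProduct_add, e1, e2]
  ring

/-- Non-strict projection lemma: there exists `X` with
`Q + Uᵀ X V + Vᵀ Xᵀ U ⪰ 0` iff (i) `xᵀ Q x ≥ 0` whenever `U x = 0`,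
(ii) `xᵀ Q x ≥ 0` whenever `V x = 0`, and (iii) `Q x = 0` whenever
`U x = 0`, `V x = 0` and `xᵀ Q x = 0`. -/
theorem stmt_12 {m n p : ℕ} (U : Matrix (Fin m) (Fin n) ℝ)
    (V : Matrix (Fin p) (Fin n) ℝ)
    (Q : Matrix (Fin n) (Fin n) ℝ) (hQ : Q.IsSymm) :
    (∃ X : Matrix (Fin m) (Fin p) ℝ,
        ∀ x : Fin n → ℝ, 0 ≤ x ⬝ᵥ ((Q + Uᵀ * X * V + Vᵀ * Xᵀ * U) *ᵥ x)) ↔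
      ((∀ x : Fin n → ℝ, U *ᵥ x = 0 → 0 ≤ x ⬝ᵥ (Q *ᵥ x)) ∧
       (∀ x : Fin n → ℝ, V *ᵥ x = 0 → 0 ≤ x ⬝ᵥ (Q *ᵥ x)) ∧
       (∀ x : Fin n → ℝ, U *ᵥ x = 0 → V *ᵥ x = 0 → x ⬝ᵥ (Q *ᵥ x) = 0 →
          Q *ᵥ x = 0)) := by
  constructor
  · rintro ⟨X, hX⟩
    refine ⟨fun x hU => ?_, fun x hV => ?_, fun x hU hV h0 => ?_⟩
    · simpa [quadForm_eq, hU] using hX x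
    · simpa [quadForm_eq, hV] using hX x
    · have hsymm : (Q + Uᵀ * X * V + Vᵀ * Xᵀ * U).IsHermitian := by
        rw [IsHermitian, conjTranspose_eq_transpose_of_trivial]
        simp only [transpose_add, transpose_mul, transpose_transpose, hQ.eq, Matrix.mul_assoc]
        abel
      have hpsd : (Q + Uᵀ * X * V + Vᵀ * Xᵀ * U).PosSemidef :=
        PosSemidef.of_dotProduct_mulVec_nonneg hsymm (fun y => by simpa using hX y)
      have hz := (hpsd.dotProduct_mulVec_zero_iff x).1 (by simp [quadForm_eq, hU, h0])
      simpa [add_mulVec, ← mulVec_mulVec, hU, hV] using hz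
  · rintro ⟨h1, h2, h3⟩
    have hBa : ∀ x y, Matrix.toLinearMap₂' ℝ Q x y = x ⬝ᵥ (Q *ᵥ y) :=
      fun x y => Matrix.toLinearMap₂'_apply' Q x y
    have hB : ∀ x y, x ⬝ᵥ (Q *ᵥ y) = y ⬝ᵥ (Q *ᵥ x) := fun x y => by
      rw [dotProduct_mulVec, ← mulVec_transpose, hQ.eq, dotProduct_comm]
    obtain ⟨β, hβ⟩ := exists_bilin (Matrix.toLinearMap₂' ℝ Q)
      (fun x y => by rw [hBa, hBa, hB]) U.mulVecLin V.mulVecLin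
      (fun x hx => by rw [hBa]; exact h1 x hx) (fun x hx => by rw [hBa]; exact h2 x hx)
      (fun x hU hV h0 => by
        rw [hBa] at h0
        refine LinearMap.ext fun y => ?_
        rw [hBa, hB, h3 x hU hV h0, dotProduct_zero]; rfl)
    refine ⟨LinearMap.toMatrix₂' ℝ β, fun x => ?_⟩
    have := hβ x
    rw [hBa] at this
    rwa [quadForm_eq, ← Matrix.toLinearMap₂'_apply' (LinearMap.toMatrix₂' ℝ β), Matrix.toLinearMap₂'_toMatrix']
end

section
/- (Matrix Finsler's lemma, sufficiency) Let M and N be real symmetric (n+m)×(n+m) matrices written in blocks M = [[M11, M12],[M12ᵀ, M22]] and N = [[N11, N12],[N12ᵀ, N22]] with M11, N11 of size n×n and M22, N22 of size m×m. Assume: N22 ⪯ 0; M22 ⪯ 0; there exist real matrices H (m×n) such that, setting G := N22·H, one has N22·G = N12ᵀ and N11 = N12·G; and there exists x̄ ∈ ℝⁿ with x̄ᵀ(M11 − M12·G − Gᵀ·M12ᵀ + Gᵀ·M22·G)x̄ > 0. If condition (M1) holds — for every real m×n matrix Z with N11 + N12·Z + Zᵀ·N12ᵀ + Zᵀ·N22·Z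 = 0 one has M11 + M12·Z + Zᵀ·M12ᵀ + Zᵀ·M22·Z ⪰ 0 — and condition (NS3) holds — every x ∈ ℝ^{n+m} with Nx = 0 and xᵀMx = 0 satisfies Mx = 0 — then there exists α ∈ ℝ such that M + αN ⪰ 0. -/
open Matrix

/-!
With `G = N22 * H` the hypotheses give `N12 = Gᵀ * N22` and `N11 = Gᵀ * N22 * G`, so the quadratic
form of `N` is `(x, y) ↦ (y + G x)ᵀ N22 (y + G x)`. It is negative semidefinite, and its kernel
consists of the `(x, y)` with `N22 (y + G x) = 0`.

If `(x, y)` lies in the kernel and `x ≠ 0`, then `Z = -G + (y + G x) xᵀ / (xᵀ x)` satisfies `Z x = y`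
and solves the quadratic equation for `N`, so `hM1` says that the form of `M` is nonnegative at
`(x, y)`. The kernel vectors `(0, y)` are limits of such vectors, because `xbar ≠ 0`; hence `M` is
nonnegative on `ker N`.

It remains to prove the nonstrict Finsler lemma `finsler_nonstrict` for `P = -N`. Modulo
`ker P ∩ ker Q`, `hNS3` makes `Q` positive on the nonzero vectors of `ker P`, and
compactness of the unit sphere produces the multiplier.
-/

/-- Nonstrict Finsler lemma: if `P ⪰ 0`, `Q` is nonnegative on `ker P`, and the zeros of the form of
`Q` in `ker P` lie in `ker Q`, then `Q + β P ⪰ 0` for some `β`. -/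
theorem finsler_nonstrict {ι : Type*} [Fintype ι] (P Q : Matrix ι ι ℝ)
    (hPs : P.IsSymm) (hQs : Q.IsSymm) (hP : ∀ x, 0 ≤ x ⬝ᵥ (P *ᵥ x))
    (hQ : ∀ x, P *ᵥ x = 0 → 0 ≤ x ⬝ᵥ (Q *ᵥ x))
    (hQ0 : ∀ x, P *ᵥ x = 0 → x ⬝ᵥ (Q *ᵥ x) = 0 → Q *ᵥ x = 0) :
    ∃ β : ℝ, ∀ x : ι → ℝ, 0 ≤ x ⬝ᵥ (Q *ᵥ x) + β * (x ⬝ᵥ (P *ᵥ x)) := by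
  classical
  have hPpsd : P.PosSemidef := by
    refine Matrix.PosSemidef.of_dotProduct_mulVec_nonneg ?_ ?_
    · rw [Matrix.IsHermitian, Matrix.conjTranspose_eq_transpose_of_trivial]; exact hPs
    · intro x; simpa using hP x
  have hker : ∀ x, x ⬝ᵥ (P *ᵥ x) = 0 → P *ᵥ x = 0 := by
    intro x hx
    exact (hPpsd.dotProduct_mulVec_zero_iff x).1 (by simpa using hx)
  obtain ⟨W, hW⟩ := Submodule.exists_isCompl (LinearMap.ker P.mulVecLin ⊓ LinearMap.ker Q.mulVecLin)
  have hcont : ∀ A : Matrix ι ι ℝ, Continuous fun x : ι → ℝ => x ⬝ᵥ (A *ᵥ x) := fun A => by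
    fun_prop
  have hcpt : IsCompact (Metric.sphere (0 : ι → ℝ) 1 ∩ (W : Set (ι → ℝ))) :=
    (isCompact_sphere 0 1).inter_right W.closed_of_finiteDimensional
  have hpos : ∀ x ∈ W, x ≠ 0 → P *ᵥ x = 0 → 0 < x ⬝ᵥ (Q *ᵥ x) := by
    intro x hxW hx0 hPx
    refine lt_of_le_of_ne (hQ x hPx) fun h => hx0 ?_
    have hmem : x ∈ LinearMap.ker P.mulVecLin ⊓ LinearMap.ker Q.mulVecLin := by
      simp [hPx, hQ0 x hPx h.symm]
    exact Submodule.disjoint_def.1 hW.disjoint x hmem hxW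
  -- The sets `{Q + k P > 0}` are open, increase with `k`, and cover the unit sphere of `W`.
  obtain ⟨k, hk⟩ := hcpt.elim_directed_cover
    (fun k : ℕ => {x : ι → ℝ | 0 < x ⬝ᵥ (Q *ᵥ x) + k * (x ⬝ᵥ (P *ᵥ x))})
    (fun k => isOpen_lt continuous_const ((hcont Q).add (continuous_const.mul (hcont P))))
    (by
      rintro x ⟨hx1, hxW⟩
      have hx0 : x ≠ 0 := by
        rintro rfl
        simp at hx1
      simp only [Set.mem_iUnion, Set.mem_ofPred_eq]
      rcases (hP x).eq_or_lt with h | h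
      · exact ⟨0, by simpa using hpos x hxW hx0 (hker x h.symm)⟩
      · obtain ⟨k, hk⟩ := exists_nat_gt (-(x ⬝ᵥ (Q *ᵥ x)) / (x ⬝ᵥ (P *ᵥ x)))
        rw [div_lt_iff₀ h] at hk
        exact ⟨k, by linarith⟩)
    (Monotone.directed_le (by
      intro i j hij x hx
      simp only [Set.mem_ofPred_eq] at hx ⊢
      have hij' : (i : ℝ) ≤ j := by exact_mod_cast hij
      have := mul_le_mul_of_nonneg_right hij' (hP x)
      linarith))
  have hWnn : ∀ w ∈ W, 0 ≤ w ⬝ᵥ (Q *ᵥ w) + k * (w ⬝ᵥ (P *ᵥ w)) := by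
    intro w hw
    rcases eq_or_ne w 0 with rfl | hw0
    · simp
    have hn : 0 < ‖w‖ := norm_pos_iff.2 hw0
    have h := hk (show ‖w‖⁻¹ • w ∈ _ from ⟨by simp [norm_smul, hn.ne'], W.smul_mem _ hw⟩)
    simp only [Set.mem_ofPred_eq, mulVec_smul, smul_dotProduct, dotProduct_smul, smul_eq_mul] at h
    have h2 : 0 < ‖w‖⁻¹ * ‖w‖⁻¹ * (w ⬝ᵥ (Q *ᵥ w) + k * (w ⬝ᵥ (P *ᵥ w))) := by
      convert h using 1; ring
    exact (pos_of_mul_pos_right h2 (by positivity)).le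
  refine ⟨k, fun x => ?_⟩
  obtain ⟨u, hu, w, hw, rfl⟩ := Submodule.mem_sup.1
    (show x ∈ (LinearMap.ker P.mulVecLin ⊓ LinearMap.ker Q.mulVecLin) ⊔ W by
      rw [hW.sup_eq_top]; trivial)
  simp only [Submodule.mem_inf, LinearMap.mem_ker, mulVecLin_apply] at hu
  have key : ∀ A : Matrix ι ι ℝ, A.IsSymm → A *ᵥ u = 0 →
      (u + w) ⬝ᵥ (A *ᵥ (u + w)) = w ⬝ᵥ (A *ᵥ w) := by
    intro A hA hAu
    rw [mulVec_add, hAu, zero_add, add_dotProduct, dotProduct_mulVec u, ← mulVec_transpose, hA.eq,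
      hAu, zero_dotProduct, zero_add]
  rw [key P hPs hu.1, key Q hQs hu.2]
  exact hWnn w hw

/-- Matrix Finsler's lemma, sufficiency: under the structural assumptions on
the blocks of `M` and `N`, conditions (M1) and (NS3) imply that
`M + α N ⪰ 0` for some `α ∈ ℝ`. -/
theorem stmt_13 {n m : ℕ}
    (M11 N11 : Matrix (Fin n) (Fin n) ℝ)
    (M12 N12 : Matrix (Fin n) (Fin m) ℝ)
    (M22 N22 : Matrix (Fin m) (Fin m) ℝ)
    (hM11 : M11.IsSymm) (hN11 : N11.IsSymm)
    (hM22 : M22.IsSymm) (hN22 : N22.IsSymm)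
    (hN22nsd : ∀ q : Fin m → ℝ, q ⬝ᵥ (N22 *ᵥ q) ≤ 0)
    (hM22nsd : ∀ q : Fin m → ℝ, q ⬝ᵥ (M22 *ᵥ q) ≤ 0)
    (hG : ∃ H : Matrix (Fin m) (Fin n) ℝ,
        N22 * (N22 * H) = N12ᵀ ∧ N11 = N12 * (N22 * H) ∧
        (∃ xbar : Fin n → ℝ,
          0 < xbar ⬝ᵥ ((M11 - M12 * (N22 * H) - (N22 * H)ᵀ * M12ᵀ +
            (N22 * H)ᵀ * M22 * (N22 * H)) *ᵥ xbar)))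
    (hM1 : ∀ Z : Matrix (Fin m) (Fin n) ℝ,
        N11 + N12 * Z + Zᵀ * N12ᵀ + Zᵀ * N22 * Z = 0 →
        ∀ y : Fin n → ℝ,
          0 ≤ y ⬝ᵥ ((M11 + M12 * Z + Zᵀ * M12ᵀ + Zᵀ * M22 * Z) *ᵥ y))
    (hNS3 : ∀ x : (Fin n ⊕ Fin m) → ℝ,
        (fromBlocks N11 N12 N12ᵀ N22) *ᵥ x = 0 →
        x ⬝ᵥ ((fromBlocks M11 M12 M12ᵀ M22) *ᵥ x) = 0 →
        (fromBlocks M11 M12 M12ᵀ M22) *ᵥ x = 0) :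
    ∃ α : ℝ, ∀ x : (Fin n ⊕ Fin m) → ℝ,
      0 ≤ x ⬝ᵥ ((fromBlocks M11 M12 M12ᵀ M22 +
        α • fromBlocks N11 N12 N12ᵀ N22) *ᵥ x) := by
  obtain ⟨H, hG1, hG2, xbar, hxbar⟩ := hG
  generalize N22 * H = G at hG1 hG2 hxbar
  have hN12 : N12 = Gᵀ * N22 := by
    rw [← transpose_transpose N12, ← hG1, transpose_mul, hN22.eq]
  have hx0 : xbar ≠ 0 := by
    rintro rfl
    simp at hxbar
  have hquad : ∀ (A : Matrix (Fin n) (Fin n) ℝ) (B : Matrix (Fin n) (Fin m) ℝ)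
      (C : Matrix (Fin m) (Fin m) ℝ) (x : Fin n → ℝ) (y : Fin m → ℝ),
      Sum.elim x y ⬝ᵥ (fromBlocks A B Bᵀ C *ᵥ Sum.elim x y) =
        x ⬝ᵥ (A *ᵥ x) + x ⬝ᵥ (B *ᵥ y) + y ⬝ᵥ (Bᵀ *ᵥ x) + y ⬝ᵥ (C *ᵥ y) := by
    intro A B C x y
    rw [fromBlocks_mulVec, sumElim_dotProduct_sumElim]
    simp only [Sum.elim_comp_inl, Sum.elim_comp_inr, dotProduct_add]
    ring
  have hNquad : ∀ (x : Fin n → ℝ) (y : Fin m → ℝ),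
      fromBlocks N11 N12 N12ᵀ N22 *ᵥ Sum.elim x y =
        Sum.elim (Gᵀ *ᵥ (N22 *ᵥ (y + G *ᵥ x))) (N22 *ᵥ (y + G *ᵥ x)) := by
    intro x y
    rw [fromBlocks_mulVec, hG2, ← hG1, hN12]
    simp only [Sum.elim_comp_inl, Sum.elim_comp_inr, mulVec_add, mulVec_mulVec, Matrix.mul_assoc,
      add_comm]
  have hNnsd : ∀ v, v ⬝ᵥ (fromBlocks N11 N12 N12ᵀ N22 *ᵥ v) ≤ 0 := by
    intro v
    obtain ⟨x, y, rfl⟩ : ∃ x y, v = Sum.elim x y :=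
      ⟨_, _, (Sum.elim_comp_inl_inr v).symm⟩
    have h := hN22nsd (y + G *ᵥ x)
    rw [hNquad, sumElim_dotProduct_sumElim, dotProduct_mulVec x, vecMul_transpose, ← add_dotProduct,
      add_comm]
    exact h
  have hne : ∀ (x : Fin n → ℝ) (y : Fin m → ℝ), x ≠ 0 → N22 *ᵥ (y + G *ᵥ x) = 0 →
      0 ≤ Sum.elim x y ⬝ᵥ (fromBlocks M11 M12 M12ᵀ M22 *ᵥ Sum.elim x y) := by
    intro x y hx hxy
    have hxx : x ⬝ᵥ x ≠ 0 := fun h => hx (dotProduct_self_eq_zero.1 h)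
    obtain ⟨K, hK⟩ : ∃ K, K = (x ⬝ᵥ x)⁻¹ • vecMulVec (y + G *ᵥ x) x := ⟨_, rfl⟩
    have hNK : N22 * K = 0 := by
      rw [hK, Matrix.mul_smul, mul_vecMulVec, hxy, zero_vecMulVec, smul_zero]
    have hKx : K *ᵥ x = y + G *ᵥ x := by
      rw [hK, smul_mulVec, vecMulVec_mulVec]
      ext i
      simp
      field_simp
    have hZx : (K - G) *ᵥ x = y := by
      rw [sub_mulVec, hKx, add_sub_cancel_right]
    have hNZ : N11 + N12 * (K - G) + (K - G)ᵀ * N12ᵀ + (K - G)ᵀ * N22 * (K - G) = 0 := by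
      have h1 : N12 * (K - G) = -N11 := by
        rw [Matrix.mul_sub, hG2, hN12, Matrix.mul_assoc Gᵀ N22 K, hNK, Matrix.mul_zero, zero_sub]
      have h2 : N22 * (K - G) = -N12ᵀ := by
        rw [Matrix.mul_sub, hNK, hG1, zero_sub]
      rw [Matrix.mul_assoc _ N22, h1, h2, Matrix.mul_neg]
      abel
    have h := hM1 _ hNZ x
    have e : ∀ q : Fin m → ℝ, x ⬝ᵥ ((K - G)ᵀ *ᵥ q) = y ⬝ᵥ q := by
      intro q
      rw [dotProduct_mulVec, vecMul_transpose, hZx]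
    rw [hquad]
    simpa only [add_mulVec, dotProduct_add, ← mulVec_mulVec, hZx, e] using h
  have hnn : ∀ v, fromBlocks N11 N12 N12ᵀ N22 *ᵥ v = 0 →
      0 ≤ v ⬝ᵥ (fromBlocks M11 M12 M12ᵀ M22 *ᵥ v) := by
    intro v hv
    obtain ⟨x, y, rfl⟩ : ∃ x y, v = Sum.elim x y :=
      ⟨_, _, (Sum.elim_comp_inl_inr v).symm⟩
    have hker : N22 *ᵥ (y + G *ᵥ x) = 0 := by
      rw [hNquad] at hv
      ext i
      simpa using congrFun hv (Sum.inr i)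
    rcases eq_or_ne x 0 with rfl | hx
    swap
    · exact hne x y hx hker
    -- Approximate `(0, y)` by the kernel vectors `(t xbar, y - t G xbar)`, `t ≠ 0`.
    have hcl : IsClosed {t : ℝ | 0 ≤ Sum.elim (t • xbar) (y - t • G *ᵥ xbar) ⬝ᵥ
        (fromBlocks M11 M12 M12ᵀ M22 *ᵥ Sum.elim (t • xbar) (y - t • G *ᵥ xbar))} := by
      simp only [hquad]
      exact isClosed_le continuous_const (by fun_prop)
    have hmem := (dense_compl_singleton (0 : ℝ)).induction
      (P := fun t : ℝ => 0 ≤ Sum.elim (t • xbar) (y - t • G *ᵥ xbar) ⬝ᵥ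
        (fromBlocks M11 M12 M12ᵀ M22 *ᵥ Sum.elim (t • xbar) (y - t • G *ᵥ xbar)))
      (fun t ht => hne _ _ (smul_ne_zero ht hx0) (by
        rw [mulVec_smul, sub_add_cancel]
        simpa using hker)) hcl 0
    simpa using hmem
  obtain ⟨β, hβ⟩ := finsler_nonstrict (-fromBlocks N11 N12 N12ᵀ N22) (fromBlocks M11 M12 M12ᵀ M22)
    (IsSymm.fromBlocks hN11 rfl hN22).neg (IsSymm.fromBlocks hM11 rfl hM22)
    (fun v => by simpa [neg_mulVec] using hNnsd v)
    (fun v hv => hnn v (by simpa [neg_mulVec] using hv))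
    (fun v hv => hNS3 v (by simpa [neg_mulVec] using hv))
  refine ⟨-β, fun v => ?_⟩
  have h := hβ v
  simp only [neg_mulVec, dotProduct_neg] at h
  rw [add_mulVec, smul_mulVec, dotProduct_add, dotProduct_smul, smul_eq_mul]
  linarith
end

section
/- (Matrix Finsler's lemma) Let M and N be real symmetric (n+m)×(n+m) matrices written in blocks M = [[M11, M12],[M12ᵀ, M22]] and N = [[N11, N12],[N12ᵀ, N22]] with M11, N11 of size n×n and M22, N22 of size m×m. Assume: N22 ⪯ 0; M22 ⪯ 0; there exists a real m×n matrix H such that, setting G := N22·H, one has N22·G = N12ᵀ and N11 = N12·G; and there exists x̄ ∈ ℝⁿ with x̄ᵀ(M11 − M12·G − Gᵀ·M12ᵀ + Gᵀ·M22·G)x̄ > 0. Then there exists α ∈ ℝ such that M + αN ⪰ 0 if and only if both of the following hold: (M1) for every real m×n matrix Z with N11 + N12·Z + Zᵀ·N12ᵀ + Zᵀ·N22·Z = 0 one has M11 + M12·Z + Zᵀ·M12ᵀ + Zᵀ·M22·Z ⪰ 0; and (NS3) every x ∈ ℝ^{n+m} with Nx = 0 and xᵀMx = 0 satisfies Mx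 = 0. -/
open Matrix

/-!
The existence of `α` is Finsler's lemma for the pair `(M, -N)`, in its non-strict form: if `P ⪰ 0`,
`S ≥ 0` on `ker P`, and every zero of the form of `S` on `ker P` lies in `ker S`, then
`S + β P ⪰ 0` for some `β` (`exists_forall_nonneg_add_mul`). For this, split off
`W = ker S ∩ ker P`, on which both forms are degenerate; on the unit sphere of a complement of `W`
the form of `S` is positive wherever that of `P` vanishes, and compactness gives `β`.

The hypotheses on `G = N22 * H` say that `N = [G I]ᵀ N22 [G I]`, so `-N ⪰ 0` and `(p, q) ∈ ker N`
iff `N22 (q + G p) = 0`. The matrices `Z` tested in (M1) include all `Z = K - G` with `N22 K = 0`,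
and their graphs contain all `(p, q) ∈ ker N` with `p ≠ 0` (take `K` of rank one). The remaining
vectors `(0, q)` are limits of such ones, because `x̄ ≠ 0`. Hence (M1) gives `M ≥ 0` on `ker N`.
-/

/-- The form of a symmetric `S` is invariant under translation by `ker S`. -/
lemma form_add_of_mulVec_eq_zero {ι : Type*} [Fintype ι] {S : Matrix ι ι ℝ} (hS : S.IsSymm)
    {w : ι → ℝ} (hw : S *ᵥ w = 0) (u : ι → ℝ) :
    (w + u) ⬝ᵥ (S *ᵥ (w + u)) = u ⬝ᵥ (S *ᵥ u) := by
  have h : w ⬝ᵥ (S *ᵥ u) = 0 := by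
    rw [dotProduct_mulVec, ← mulVec_transpose, hS.eq, hw, zero_dotProduct]
  rw [mulVec_add, hw, zero_add, add_dotProduct, h, zero_add]

lemma mulVec_eq_zero_of_form_eq_zero {ι : Type*} [Fintype ι] {P : Matrix ι ι ℝ}
    (hP : P.IsSymm) (hP0 : ∀ x, 0 ≤ x ⬝ᵥ (P *ᵥ x)) {x : ι → ℝ} (hx : x ⬝ᵥ (P *ᵥ x) = 0) :
    P *ᵥ x = 0 := by
  classical
  have h : P.PosSemidef := PosSemidef.of_dotProduct_mulVec_nonneg
    (by rw [IsHermitian, conjTranspose_eq_transpose_of_trivial, hP.eq])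
    (by simpa using hP0)
  exact (h.dotProduct_mulVec_zero_iff x).1 (by simpa using hx)

/-- Non-strict Finsler lemma for a symmetric `S` and a positive semidefinite `P`. -/
lemma exists_forall_nonneg_add_mul {ι : Type*} [Fintype ι] {S P : Matrix ι ι ℝ}
    (hS : S.IsSymm) (hP : P.IsSymm) (hP0 : ∀ x, 0 ≤ x ⬝ᵥ (P *ᵥ x))
    (hSP : ∀ x, P *ᵥ x = 0 → 0 ≤ x ⬝ᵥ (S *ᵥ x))
    (hker : ∀ x, P *ᵥ x = 0 → x ⬝ᵥ (S *ᵥ x) = 0 → S *ᵥ x = 0) :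
    ∃ β : ℝ, ∀ x, 0 ≤ x ⬝ᵥ (S *ᵥ x) + β * (x ⬝ᵥ (P *ᵥ x)) := by
  obtain ⟨C, hC⟩ := Submodule.exists_isCompl
    (LinearMap.ker S.mulVecLin ⊓ LinearMap.ker P.mulVecLin)
  have hK : IsCompact (Metric.sphere (0 : ι → ℝ) 1 ∩ C) :=
    (isCompact_sphere _ _).inter_right C.closed_of_finiteDimensional
  -- On the sphere of the complement the open sets `{S + k P > 0}` increase with `k` and cover.
  obtain ⟨k, hk⟩ := hK.elim_directed_cover
    (fun k : ℕ => {x : ι → ℝ | 0 < x ⬝ᵥ (S *ᵥ x) + k * (x ⬝ᵥ (P *ᵥ x))})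
    (fun k => isOpen_lt continuous_const (by fun_prop))
    (by
      rintro x ⟨hx1, hxC⟩
      simp only [Set.mem_iUnion, Set.mem_ofPred_eq]
      rcases (hP0 x).eq_or_lt with h0 | hpos
      · have hPx := mulVec_eq_zero_of_form_eq_zero hP hP0 h0.symm
        refine ⟨0, ?_⟩
        have hne : x ⬝ᵥ (S *ᵥ x) ≠ 0 := by
          intro h
          have hmem : x ∈ (LinearMap.ker S.mulVecLin ⊓ LinearMap.ker P.mulVecLin) ⊓ C :=
            ⟨⟨hker x hPx h, hPx⟩, hxC⟩
          rw [hC.inf_eq_bot, Submodule.mem_bot] at hmem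
          simp [hmem] at hx1
        simpa using lt_of_le_of_ne (hSP x hPx) hne.symm
      · obtain ⟨k, hk⟩ := exists_nat_gt (-(x ⬝ᵥ (S *ᵥ x)) / (x ⬝ᵥ (P *ᵥ x)))
        rw [div_lt_iff₀ hpos] at hk
        exact ⟨k, by linarith⟩)
    (directed_of_isDirected_le (by
      intro i j hij x hx
      have hij' : (i : ℝ) ≤ j := by exact_mod_cast hij
      have := mul_le_mul_of_nonneg_right hij' (hP0 x)
      simp only [Set.mem_ofPred_eq] at hx ⊢
      linarith))
  refine ⟨k, fun x => ?_⟩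
  have hx : x ∈ (LinearMap.ker S.mulVecLin ⊓ LinearMap.ker P.mulVecLin) ⊔ C := by
    rw [hC.sup_eq_top]; trivial
  obtain ⟨w, ⟨hwS, hwP⟩, u, hu, rfl⟩ := Submodule.mem_sup.1 hx
  rw [form_add_of_mulVec_eq_zero hS hwS, form_add_of_mulVec_eq_zero hP hwP]
  rcases eq_or_ne u 0 with rfl | hu0
  · simp
  have hn : 0 < ‖u‖ := norm_pos_iff.2 hu0
  have h : 0 < (‖u‖⁻¹ • u) ⬝ᵥ (S *ᵥ (‖u‖⁻¹ • u)) + k * ((‖u‖⁻¹ • u) ⬝ᵥ (P *ᵥ (‖u‖⁻¹ • u))) :=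
    hk ⟨by simp [norm_smul, hn.ne'], C.smul_mem _ hu⟩
  simp only [mulVec_smul, smul_dotProduct, dotProduct_smul, smul_eq_mul] at h
  have h2 : 0 < ‖u‖⁻¹ * ‖u‖⁻¹ * (u ⬝ᵥ (S *ᵥ u) + k * (u ⬝ᵥ (P *ᵥ u))) := by linarith
  exact (pos_of_mul_pos_right h2 (by positivity)).le

/-- The form of a block matrix on the graph of `Z`. -/
lemma form_graph {n m : ℕ} (A : Matrix (Fin n) (Fin n) ℝ) (B : Matrix (Fin n) (Fin m) ℝ)
    (D : Matrix (Fin m) (Fin m) ℝ) (Z : Matrix (Fin m) (Fin n) ℝ) (y : Fin n → ℝ) :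
    Sum.elim y (Z *ᵥ y) ⬝ᵥ (fromBlocks A B Bᵀ D *ᵥ Sum.elim y (Z *ᵥ y)) =
      y ⬝ᵥ ((A + B * Z + Zᵀ * Bᵀ + Zᵀ * D * Z) *ᵥ y) := by
  have h : ∀ v : Fin m → ℝ, y ⬝ᵥ (Zᵀ *ᵥ v) = (Z *ᵥ y) ⬝ᵥ v := by
    intro v
    rw [dotProduct_mulVec, vecMul_transpose]
  simp only [fromBlocks_mulVec, Sum.elim_comp_inl, Sum.elim_comp_inr, sumElim_dotProduct_sumElim,
    add_mulVec, dotProduct_add, ← mulVec_mulVec, h]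
  ring

/-- Matrix Finsler's lemma: under the structural assumptions on the blocks of
`M` and `N`, `∃ α, M + α N ⪰ 0` iff (M1) and (NS3) hold. -/
theorem stmt_14 {n m : ℕ}
    (M11 N11 : Matrix (Fin n) (Fin n) ℝ)
    (M12 N12 : Matrix (Fin n) (Fin m) ℝ)
    (M22 N22 : Matrix (Fin m) (Fin m) ℝ)
    (hM11 : M11.IsSymm) (hN11 : N11.IsSymm)
    (hM22 : M22.IsSymm) (hN22 : N22.IsSymm)
    (hN22nsd : ∀ q : Fin m → ℝ, q ⬝ᵥ (N22 *ᵥ q) ≤ 0)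
    (hM22nsd : ∀ q : Fin m → ℝ, q ⬝ᵥ (M22 *ᵥ q) ≤ 0)
    (hG : ∃ H : Matrix (Fin m) (Fin n) ℝ,
        N22 * (N22 * H) = N12ᵀ ∧ N11 = N12 * (N22 * H) ∧
        (∃ xbar : Fin n → ℝ,
          0 < xbar ⬝ᵥ ((M11 - M12 * (N22 * H) - (N22 * H)ᵀ * M12ᵀ +
            (N22 * H)ᵀ * M22 * (N22 * H)) *ᵥ xbar))) :
    (∃ α : ℝ, ∀ x : (Fin n ⊕ Fin m) → ℝ,
        0 ≤ x ⬝ᵥ ((fromBlocks M11 M12 M12ᵀ M22 +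
          α • fromBlocks N11 N12 N12ᵀ N22) *ᵥ x)) ↔
      ((∀ Z : Matrix (Fin m) (Fin n) ℝ,
          N11 + N12 * Z + Zᵀ * N12ᵀ + Zᵀ * N22 * Z = 0 →
          ∀ y : Fin n → ℝ,
            0 ≤ y ⬝ᵥ ((M11 + M12 * Z + Zᵀ * M12ᵀ + Zᵀ * M22 * Z) *ᵥ y)) ∧
       (∀ x : (Fin n ⊕ Fin m) → ℝ,
          (fromBlocks N11 N12 N12ᵀ N22) *ᵥ x = 0 →
          x ⬝ᵥ ((fromBlocks M11 M12 M12ᵀ M22) *ᵥ x) = 0 →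
          (fromBlocks M11 M12 M12ᵀ M22) *ᵥ x = 0)) := by
  obtain ⟨H, hG1, hN11', xbar, hxbar⟩ := hG
  set G := N22 * H with hGdef
  have hxbar0 : xbar ≠ 0 := by
    rintro rfl
    simp at hxbar
  have hN12 : N12 = Gᵀ * N22 := by
    rw [← transpose_transpose N12, ← hG1, transpose_mul, hN22.eq]
  have hMs : (fromBlocks M11 M12 M12ᵀ M22).IsSymm := IsSymm.fromBlocks hM11 rfl hM22
  have hNs : (fromBlocks N11 N12 N12ᵀ N22).IsSymm := IsSymm.fromBlocks hN11 rfl hN22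
  have hNmul : ∀ p q, fromBlocks N11 N12 N12ᵀ N22 *ᵥ Sum.elim p q =
      Sum.elim (Gᵀ *ᵥ (N22 *ᵥ (q + G *ᵥ p))) (N22 *ᵥ (q + G *ᵥ p)) := by
    intro p q
    rw [fromBlocks_mulVec, Sum.elim_comp_inl, Sum.elim_comp_inr, ← hG1, hN11', hN12]
    simp only [mulVec_add, mulVec_mulVec, Matrix.mul_assoc]
    rw [add_comm, add_comm (_ *ᵥ p)]
  have hNform : ∀ p q, Sum.elim p q ⬝ᵥ (fromBlocks N11 N12 N12ᵀ N22 *ᵥ Sum.elim p q) =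
      (q + G *ᵥ p) ⬝ᵥ (N22 *ᵥ (q + G *ᵥ p)) := by
    intro p q
    rw [hNmul, sumElim_dotProduct_sumElim, dotProduct_mulVec p, vecMul_transpose, add_dotProduct,
      add_comm]
  have hsplit : ∀ x : Fin n ⊕ Fin m → ℝ, ∃ p q, x = Sum.elim p q :=
    fun x => ⟨x ∘ Sum.inl, x ∘ Sum.inr, (Sum.elim_comp_inl_inr x).symm⟩
  constructor
  · rintro ⟨α, hα⟩
    refine ⟨fun Z hZ y => ?_, fun x hNx hMx => ?_⟩
    · have h := hα (Sum.elim y (Z *ᵥ y))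
      rw [add_mulVec, dotProduct_add, smul_mulVec, dotProduct_smul, form_graph, form_graph,
        hZ] at h
      simpa using h
    · have h0 := mulVec_eq_zero_of_form_eq_zero (hMs.add (hNs.smul α)) hα (x := x) (by
        rw [add_mulVec, smul_mulVec, hNx, smul_zero, add_zero, hMx])
      rwa [add_mulVec, smul_mulVec, hNx, smul_zero, add_zero] at h0
  · rintro ⟨hM1, hNS3⟩
    have hne : ∀ p q, p ≠ 0 → N22 *ᵥ (q + G *ᵥ p) = 0 →
        0 ≤ Sum.elim p q ⬝ᵥ (fromBlocks M11 M12 M12ᵀ M22 *ᵥ Sum.elim p q) := by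
      intro p q hp hq
      have hpp : p ⬝ᵥ p ≠ 0 := fun h => hp (dotProduct_self_eq_zero.1 h)
      -- The rank-one `K` with columns in `ker N22` that sends `p` to `q + G p`.
      set K : Matrix (Fin m) (Fin n) ℝ := (p ⬝ᵥ p)⁻¹ • vecMulVec (q + G *ᵥ p) p with hK
      have hNK : N22 * K = 0 := by
        rw [hK, Matrix.mul_smul, mul_vecMulVec, hq, zero_vecMulVec, smul_zero]
      have hKp : K *ᵥ p = q + G *ᵥ p := by
        rw [hK, smul_mulVec, vecMulVec_mulVec, op_smul_eq_smul, smul_smul, inv_mul_cancel₀ hpp,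
          one_smul]
      have hZ : N11 + N12 * (K - G) + (K - G)ᵀ * N12ᵀ + (K - G)ᵀ * N22 * (K - G) = 0 := by
        rw [← hG1, hN11', hN12]
        simp only [Matrix.mul_sub, Matrix.mul_assoc, hNK]
        simp [Matrix.sub_mul]
      have h := hM1 _ hZ p
      rw [← form_graph, sub_mulVec, hKp, add_sub_cancel_right] at h
      exact h
    have hker : ∀ p q, N22 *ᵥ (q + G *ᵥ p) = 0 →
        0 ≤ Sum.elim p q ⬝ᵥ (fromBlocks M11 M12 M12ᵀ M22 *ᵥ Sum.elim p q) := by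
      intro p q hq
      rcases ne_or_eq p 0 with hp | rfl
      · exact hne p q hp hq
      rw [mulVec_zero, add_zero] at hq
      -- Approach `(0, q)` inside `ker N` along the direction `(x̄, -G x̄)`.
      let x : ℝ → (Fin n ⊕ Fin m → ℝ) :=
        fun ε => Sum.elim (0 : Fin n → ℝ) q + ε • Sum.elim xbar (-(G *ᵥ xbar))
      have hx : ∀ ε, x ε = Sum.elim (ε • xbar) (q - ε • (G *ᵥ xbar)) := by
        intro ε
        ext (i | i) <;> simp [x, sub_eq_add_neg]
      have hc : Continuous fun ε => x ε ⬝ᵥ (fromBlocks M11 M12 M12ᵀ M22 *ᵥ x ε) := by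
        fun_prop
      have hlim := (hc.tendsto 0).mono_left (nhdsWithin_le_nhds (s := {0}ᶜ))
      have hx0 : x 0 = Sum.elim (0 : Fin n → ℝ) q := by simp [x]
      rw [hx0] at hlim
      refine ge_of_tendsto hlim ?_
      filter_upwards [self_mem_nhdsWithin] with ε hε
      rw [hx]
      refine hne _ _ (smul_ne_zero hε hxbar0) ?_
      rw [mulVec_smul, sub_add_cancel, hq]
    obtain ⟨β, hβ⟩ := exists_forall_nonneg_add_mul (S := fromBlocks M11 M12 M12ᵀ M22)
      (P := -fromBlocks N11 N12 N12ᵀ N22) hMs hNs.neg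
      (by
        intro x
        obtain ⟨p, q, rfl⟩ := hsplit x
        rw [neg_mulVec, dotProduct_neg, hNform]
        linarith [hN22nsd (q + G *ᵥ p)])
      (by
        intro x hx
        obtain ⟨p, q, rfl⟩ := hsplit x
        rw [neg_mulVec, neg_eq_zero, hNmul] at hx
        refine hker p q ?_
        ext i
        exact congrFun hx (Sum.inr i))
      (by
        intro x hx
        rw [neg_mulVec, neg_eq_zero] at hx
        exact hNS3 x hx)
    refine ⟨-β, fun x => ?_⟩
    have h := hβ x
    rw [neg_mulVec, dotProduct_neg] at h
    rw [add_mulVec, dotProduct_add, smul_mulVec, dotProduct_smul, smul_eq_mul]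
    linarith
end

section
/- Let M and N be real symmetric (n+m)×(n+m) matrices written in blocks M = [[M11, M12],[M12ᵀ, M22]] and N = [[N11, N12],[N12ᵀ, N22]] with M11, N11 of size n×n and M22, N22 of size m×m. Assume: N22 ⪯ 0; M22 ⪯ 0; there exists a real m×n matrix H such that, setting G := N22·H, one has N22·G = N12ᵀ and N11 = N12·G; there exists x̄ ∈ ℝⁿ with x̄ᵀ(M11 − M12·G − Gᵀ·M12ᵀ + Gᵀ·M22·G)x̄ > 0; and condition (NS3) holds: every x ∈ ℝ^{n+m} with Nx = 0 and xᵀMx = 0 satisfies Mx = 0. Then every q ∈ ℝᵐ with N22·q = 0 satisfies M22·q = 0 and M12·q = 0. -/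
open Matrix

/-!
The kernel of `N` contains `v = (0, q)` whenever `N22 q = 0`, because `N12 = Hᵀ N22 N22`, and it
contains `u = (x̄, -G x̄)`, because `N22 G = N12ᵀ` and `N11 = N12 G`. The quadratic form of `M` is
positive at `u` and nonpositive at `v`. If it were negative at `v`, it would vanish at some
`u + t v`, and (NS3) would put `u + t v` in the kernel of `M`, so that `uᵀMu = t² vᵀMv ≤ 0`, which is
absurd. Hence it vanishes at `v`, and (NS3) gives `M v = 0`, whose two blocks are the claim.
-/

/-- Suppose every zero of the quadratic form of `A` in the kernel of `B` lies in the kernel of `A`.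
If the form is positive somewhere on the kernel of `B`, then any vector of that kernel at which it
is nonpositive lies in the kernel of `A`. -/
lemma mulVec_eq_zero_of_nonpos {ι : Type*} [Fintype ι] (A B : Matrix ι ι ℝ) (hA : A.IsSymm)
    (h : ∀ x : ι → ℝ, B *ᵥ x = 0 → x ⬝ᵥ (A *ᵥ x) = 0 → A *ᵥ x = 0)
    (u v : ι → ℝ) (hu : B *ᵥ u = 0) (hv : B *ᵥ v = 0)
    (hpos : 0 < u ⬝ᵥ (A *ᵥ u)) (hneg : v ⬝ᵥ (A *ᵥ v) ≤ 0) : A *ᵥ v = 0 := by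
  rcases hneg.eq_or_lt with h0 | hlt
  · exact h v hv h0
  exfalso
  have hsymm : u ⬝ᵥ (A *ᵥ v) = v ⬝ᵥ (A *ᵥ u) := by
    rw [dotProduct_mulVec, ← mulVec_transpose, hA.eq, dotProduct_comm]
  have hexp : ∀ t : ℝ, A *ᵥ (u + t • v) = A *ᵥ u + t • A *ᵥ v := fun t => by
    rw [mulVec_add, mulVec_smul]
  generalize ha : v ⬝ᵥ (A *ᵥ v) = a at *
  generalize hb : v ⬝ᵥ (A *ᵥ u) = b at *
  generalize hc : u ⬝ᵥ (A *ᵥ u) = c at *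
  obtain ⟨t, ht⟩ : ∃ t : ℝ, c + 2 * b * t + a * t ^ 2 = 0 := by
    have hD : 0 ≤ b ^ 2 - a * c := by
      nlinarith [sq_nonneg b, mul_pos_of_neg_of_neg hlt (neg_lt_zero.2 hpos)]
    obtain ⟨s, hs⟩ : ∃ s : ℝ, s ^ 2 = b ^ 2 - a * c := ⟨_, Real.sq_sqrt hD⟩
    refine ⟨(-b + s) / a, ?_⟩
    have ha0 : a ≠ 0 := hlt.ne
    field_simp
    linear_combination hs
  have hz : A *ᵥ (u + t • v) = 0 := by
    apply h
    · rw [mulVec_add, mulVec_smul, hu, hv, smul_zero, add_zero]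
    · rw [hexp]
      simp only [add_dotProduct, dotProduct_add, smul_dotProduct, dotProduct_smul, smul_eq_mul,
        ha, hb, hc, hsymm]
      linear_combination ht
  rw [hexp] at hz
  have h1 : b + t * a = 0 := by
    simpa [dotProduct_add, ha, hb] using congrArg (v ⬝ᵥ ·) hz
  have h2 : c + t * b = 0 := by
    simpa [dotProduct_add, hc, hsymm] using congrArg (u ⬝ᵥ ·) hz
  have h3 : c = t ^ 2 * a := by linear_combination h2 - t * h1
  nlinarith [mul_nonneg (sq_nonneg t) (neg_nonneg.2 hlt.le)]

/-- Under the structural assumptions on the blocks of `M` and `N` together with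
(NS3), every `q` with `N22 q = 0` satisfies `M22 q = 0` and `M12 q = 0`. -/
theorem stmt_16 {n m : ℕ}
    (M11 N11 : Matrix (Fin n) (Fin n) ℝ)
    (M12 N12 : Matrix (Fin n) (Fin m) ℝ)
    (M22 N22 : Matrix (Fin m) (Fin m) ℝ)
    (hM11 : M11.IsSymm) (hN11 : N11.IsSymm)
    (hM22 : M22.IsSymm) (hN22 : N22.IsSymm)
    (hN22nsd : ∀ q : Fin m → ℝ, q ⬝ᵥ (N22 *ᵥ q) ≤ 0)
    (hM22nsd : ∀ q : Fin m → ℝ, q ⬝ᵥ (M22 *ᵥ q) ≤ 0)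
    (hG : ∃ H : Matrix (Fin m) (Fin n) ℝ,
        N22 * (N22 * H) = N12ᵀ ∧ N11 = N12 * (N22 * H) ∧
        (∃ xbar : Fin n → ℝ,
          0 < xbar ⬝ᵥ ((M11 - M12 * (N22 * H) - (N22 * H)ᵀ * M12ᵀ +
            (N22 * H)ᵀ * M22 * (N22 * H)) *ᵥ xbar)))
    (hNS3 : ∀ x : (Fin n ⊕ Fin m) → ℝ,
        (fromBlocks N11 N12 N12ᵀ N22) *ᵥ x = 0 →
        x ⬝ᵥ ((fromBlocks M11 M12 M12ᵀ M22) *ᵥ x) = 0 →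
        (fromBlocks M11 M12 M12ᵀ M22) *ᵥ x = 0) :
    ∀ q : Fin m → ℝ, N22 *ᵥ q = 0 → M22 *ᵥ q = 0 ∧ M12 *ᵥ q = 0 := by
  intro q hq
  obtain ⟨H, hH1, hH2, xbar, hx⟩ := hG
  generalize hGdef : N22 * H = G at *
  have hN12q : N12 *ᵥ q = 0 := by
    have : N12 = Gᵀ * N22 := by
      rw [← transpose_transpose N12, ← hH1, transpose_mul, hN22.eq]
    rw [this, ← mulVec_mulVec, hq, mulVec_zero]
  have key : fromBlocks M11 M12 M12ᵀ M22 *ᵥ Sum.elim (0 : Fin n → ℝ) q = 0 := by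
    refine mulVec_eq_zero_of_nonpos _ (fromBlocks N11 N12 N12ᵀ N22)
      (IsSymm.fromBlocks hM11 rfl hM22) hNS3 (Sum.elim xbar (-(G *ᵥ xbar))) _ ?_ ?_ ?_ ?_
    · rw [fromBlocks_mulVec]
      simp [Sum.elim_comp_inl, Sum.elim_comp_inr, mulVec_neg, mulVec_mulVec, hH1, ← hH2]
    · rw [fromBlocks_mulVec]
      simp [Sum.elim_comp_inl, Sum.elim_comp_inr, hN12q, hq]
    · convert hx using 1
      have hT : ∀ w : Fin m → ℝ, xbar ⬝ᵥ (Gᵀ *ᵥ w) = (G *ᵥ xbar) ⬝ᵥ w := fun w => by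
        rw [dotProduct_mulVec, vecMul_transpose]
      rw [fromBlocks_mulVec]
      simp only [Sum.elim_comp_inl, Sum.elim_comp_inr, sumElim_dotProduct_sumElim, mulVec_neg,
        add_mulVec, sub_mulVec, ← mulVec_mulVec, dotProduct_add, dotProduct_sub, dotProduct_neg,
        neg_dotProduct, hT]
      ring
    · rw [fromBlocks_mulVec]
      simpa [Sum.elim_comp_inl, Sum.elim_comp_inr] using hM22nsd q
  rw [fromBlocks_mulVec] at key
  constructor
  · ext i
    simpa using congrFun key (Sum.inr i)
  · ext i
    simpa using congrFun key (Sum.inl i)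
end
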